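/- arXiv:2401.11525 — 2 statements merged into one kernel-verified Lean document; each statement's English description precedes it below -/
import Mathlib

section
/- For any non-empty graph H (a finite simple graph with at least one edge), the limit as n tends to infinity of rwsat(n, H)/n exists. -/
open SimpleGraph

/-- The edge-colored graph `(G, c)` contains a rainbow copy of `H`
passing through the edge `e`. -/
def IsRainbowCopyThrough {W V : Type*} (H : SimpleGraph W) (G : SimpleGraph V)
    (c : Sym2 V → ℕ) (e : Sym2 V) : Prop :=
  ∃ f : W → V, Function.Injective f ∧
    (∀ ⦃a b⦄, H.Adj a b → G.Adj (f a) (f b)) ∧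
    (∀ ⦃a b a' b'⦄, H.Adj a b → H.Adj a' b' →
      c s(f a, f b) = c s(f a', f b') → s(a, b) = s(a', b')) ∧
    ∃ a b, H.Adj a b ∧ e = s(f a, f b)

/-- The edge-colored graph `(G, c)` is weakly `H`-rainbow saturated: there is an
ordering `L` of the non-edges of `G` such that for every list `cs` of pairwise
distinct colors, adding the non-edges one at a time (the `i`-th one in color `cs i`)
always creates a new rainbow copy of `H` through the added edge. -/
def WeaklyRainbowSat {W V : Type*} [DecidableEq V] (H : SimpleGraph W)
    (G : SimpleGraph V) (c : Sym2 V → ℕ) : Prop :=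
  ∃ L : List (Sym2 V), L.Nodup ∧ (∀ e, e ∈ L ↔ e ∈ Gᶜ.edgeSet) ∧
    ∀ cs : List ℕ, cs.length = L.length → cs.Nodup →
      ∀ i : Fin L.length,
        IsRainbowCopyThrough H
          (G ⊔ SimpleGraph.fromEdgeSet {e | e ∈ L.take ((i : ℕ) + 1)})
          (((L.zip cs).take ((i : ℕ) + 1)).foldl
            (fun c' p => Function.update c' p.1 p.2) c)
          (L.get i)

/-- The weak rainbow saturation number `rwsat(n, H)`: the minimum number of edges
in a weakly `H`-rainbow saturated edge-colored graph on `n` vertices, where by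
convention the value is `n.choose 2` if no such graph exists. -/
noncomputable def rwsat {W : Type*} (H : SimpleGraph W) (n : ℕ) : ℕ :=
  sInf ({m | ∃ (G : SimpleGraph (Fin n)) (c : Sym2 (Fin n) → ℕ),
    WeaklyRainbowSat H G c ∧ G.edgeSet.ncard = m} ∪ {n.choose 2})

/-- `δ'(H)`: the minimum degree among vertices of nonzero degree. -/
noncomputable def minPosDeg {W : Type*} (H : SimpleGraph W) : ℕ :=
  sInf {d | ∃ v, (H.neighborSet v).ncard = d ∧ d ≠ 0}

/-- `A` is contained in `B` as a subgraph (there is an injective graph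
homomorphism from `A` to `B`). -/
def ContainsCopy {α β : Type*} (A : SimpleGraph α) (B : SimpleGraph β) : Prop :=
  ∃ f : α → β, Function.Injective f ∧ ∀ ⦃a b⦄, A.Adj a b → B.Adj (f a) (f b)

/-- The Turán number `ex(N, ℋ)` of the family `ℋ = {H - {u, v} : uv ∈ E(H)}`:
the maximum number of edges of an `N`-vertex graph containing no member of `ℋ`. -/
noncomputable def exFam {W : Type*} (H : SimpleGraph W) (N : ℕ) : ℕ :=
  sSup {m | ∃ G : SimpleGraph (Fin N),
    (∀ u v : W, H.Adj u v → ¬ ContainsCopy (H.induce ({u, v}ᶜ : Set W)) G) ∧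
    G.edgeSet.ncard = m}

/-- `f(H)`: the smallest `n` such that for each `N ∈ {n-1, n}` one has
`ex(N, ℋ) ≤ C(N,2) - 2N - 2`. -/
noncomputable def fH {W : Type*} (H : SimpleGraph W) : ℕ :=
  sInf {n | ∀ N ∈ ({n - 1, n} : Set ℕ),
    (exFam H N : ℤ) ≤ (N.choose 2 : ℤ) - 2 * N - 2}

/-- The coloring `c` is rainbow (injective) on the set `S` of edges. -/
def RainbowOn {V : Type*} (c : Sym2 V → ℕ) (S : Set (Sym2 V)) : Prop :=
  ∀ e₁ ∈ S, ∀ e₂ ∈ S, c e₁ = c e₂ → e₁ = e₂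


/-- A full coloring is valid for `(G,c)` if it extends `c` and is injective on non-edges. -/
def ValidCol {V : Type*} (G : SimpleGraph V) (c χ : Sym2 V → ℕ) : Prop :=
  (∀ e ∈ G.edgeSet, χ e = c e) ∧ Set.InjOn χ Gᶜ.edgeSet

/-- `P` is closed under adding forced edges. -/
def ClosedGr {W V : Type*} (H : SimpleGraph W) (G : SimpleGraph V) (c : Sym2 V → ℕ)
    (P : SimpleGraph V) : Prop :=
  G ≤ P ∧ ∀ u v, u ≠ v → (∀ χ, ValidCol G c χ →
    IsRainbowCopyThrough H (P ⊔ SimpleGraph.edge u v) χ s(u, v)) → P.Adj u v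

/-- Order-free reformulation of weak rainbow saturation. -/
def SatC {W V : Type*} (H : SimpleGraph W) (G : SimpleGraph V) (c : Sym2 V → ℕ) : Prop :=
  ∀ P, ClosedGr H G c P → P = ⊤

lemma copy_mono {W V : Type*} {H : SimpleGraph W} {G G' : SimpleGraph V}
    {c c' : Sym2 V → ℕ} {e : Sym2 V} (h : IsRainbowCopyThrough H G c e)
    (hG : G ≤ G') (hc : ∀ e ∈ G.edgeSet, c e = c' e) : IsRainbowCopyThrough H G' c' e := by
  obtain ⟨f, hf, h1, h2, h3⟩ := h
  refine ⟨f, hf, fun a b hab => hG (h1 hab), fun a b a' b' hab hab' he => ?_, h3⟩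
  apply h2 hab hab'
  rw [hc _ (h1 hab), hc _ (h1 hab'), he]

lemma foldl_upd {V : Type*} [DecidableEq V] (χ : Sym2 V → ℕ) (l : List (Sym2 V)) :
    ∀ (c : Sym2 V → ℕ) (e : Sym2 V),
    ((l.map (fun e => (e, χ e))).foldl (fun c' p => Function.update c' p.1 p.2) c) e =
      if e ∈ l then χ e else c e := by
  induction l with
  | nil => intro c e; simp
  | cons x l ih =>
    intro c e
    simp only [List.map_cons, List.foldl_cons, ih, List.mem_cons]
    by_cases h : e ∈ l
    · simp [h]
    · by_cases hx : e = x
      · subst hx; simp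
      · simp [h, hx]

lemma zip_take_map {V : Type*} (χ : Sym2 V → ℕ) (l : List (Sym2 V)) (i : ℕ) :
    (l.zip (l.map χ)).take i = (l.take i).map (fun e => (e, χ e)) := by
  rw [List.zip_map_right, List.map_take]
  congr 1
  induction l with
  | nil => simp
  | cons x l ih => simpa using ih

lemma exists_map_eq {α : Type*} (l : List α) (hl : l.Nodup) :
    ∀ cs : List ℕ, cs.length = l.length → ∃ χ : α → ℕ, l.map χ = cs := by
  classical
  induction l with
  | nil => intro cs h; exact ⟨fun _ => 0, by simp at h; simp [h]⟩
  | cons x l ih =>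
    intro cs h
    cases cs with
    | nil => simp at h
    | cons y cs =>
      obtain ⟨χ, hχ⟩ := ih hl.of_cons cs (by simpa using h)
      refine ⟨Function.update χ x y, ?_⟩
      simp only [List.map_cons, Function.update_self, List.cons.injEq, true_and]
      rw [← hχ]
      apply List.map_congr_left
      intro a ha
      rw [Function.update_of_ne]
      rintro rfl
      exact (List.nodup_cons.1 hl).1 ha

lemma adj_or_compl {V : Type*} (G : SimpleGraph V) {u v : V} (h : u ≠ v) :
    s(u, v) ∈ G.edgeSet ∨ s(u, v) ∈ Gᶜ.edgeSet := by
  by_cases h' : G.Adj u v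
  · left; exact h'
  · right; simp [h, h']

lemma satC_of_wrs {W V : Type*} [DecidableEq V] {H : SimpleGraph W} {G : SimpleGraph V}
    {c : Sym2 V → ℕ} (h : WeaklyRainbowSat H G c) : SatC H G c := by
  obtain ⟨L, hnd, hL, hcs⟩ := h
  intro P ⟨hGP, hP⟩
  have key : ∀ i, i ≤ L.length → ∀ e ∈ L.take i, e ∈ P.edgeSet := by
    intro i
    induction i with
    | zero => intro _ e he; simp at he
    | succ i ih =>
      intro hi e he
      have ih := ih (by omega)
      have htk : L.take (i + 1) = L.take i ++ [L[i]] := by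
        rw [List.take_append_getElem]
      rw [htk, List.mem_append, List.mem_singleton] at he
      rcases he with he | he
      · exact ih e he
      have hmem : e ∈ Gᶜ.edgeSet := (hL e).1 (he ▸ List.getElem_mem _)
      induction e using Sym2.ind with
      | _ u v =>
      have huv : u ≠ v := by
        rintro rfl; simp at hmem
      refine hP u v huv fun χ hχ => ?_
      have := hcs (L.map χ) (by simp) (by
        refine List.Nodup.map_on ?_ hnd
        intro x hx y hy hxy
        exact hχ.2 ((hL x).1 hx) ((hL y).1 hy) hxy) ⟨i, by omega⟩
      simp only [zip_take_map, List.get_eq_getElem, ← he] at this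
      refine copy_mono this ?_ ?_
      · refine sup_le (hGP.trans le_sup_left) ?_
        intro a b hab
        simp only [fromEdgeSet_adj, Set.mem_setOf_eq, htk, List.mem_append,
          List.mem_singleton, ← he] at hab
        rcases hab with ⟨hab | hab, hne⟩
        · exact Or.inl (ih _ hab)
        · refine Or.inr ?_
          rw [edge_adj]
          refine ⟨?_, hne⟩
          simpa using hab
      · intro e' he'
        rw [foldl_upd]
        split_ifs with h1
        · rfl
        · rw [edgeSet_sup, edgeSet_fromEdgeSet] at he'
          rcases he' with he' | he'
          · exact (hχ.1 _ he').symm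
          · exact absurd he'.1 h1
  rw [eq_top_iff]
  intro u v huv
  rcases adj_or_compl G huv with h1 | h1
  · exact hGP h1
  · exact key L.length le_rfl s(u, v) (by rw [List.take_length]; exact (hL _).2 h1)

/-- partial good list -/
def GoodList {W V : Type*} (H : SimpleGraph W) (G : SimpleGraph V) (c : Sym2 V → ℕ)
    (L : List (Sym2 V)) : Prop :=
  L.Nodup ∧ (∀ e ∈ L, e ∈ Gᶜ.edgeSet) ∧ ∀ χ, ValidCol G c χ → ∀ i : Fin L.length,
    IsRainbowCopyThrough H (G ⊔ SimpleGraph.fromEdgeSet {e | e ∈ L.take ((i : ℕ) + 1)}) χ (L.get i)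

lemma exists_goodList {W V : Type*} [Fintype V] [DecidableEq V] {H : SimpleGraph W}
    {G : SimpleGraph V} {c : Sym2 V → ℕ} (h : SatC H G c) :
    ∃ L, GoodList H G c L ∧ ∀ e, e ∈ Gᶜ.edgeSet → e ∈ L := by
  by_contra hcon
  push Not at hcon
  have key : ∀ n : ℕ, ∃ L, GoodList H G c L ∧ L.length = n := by
    intro n
    induction n with
    | zero => exact ⟨[], ⟨by simp, by simp, fun χ _ i => i.elim0⟩, rfl⟩
    | succ n ih =>
      obtain ⟨L, hL, hn⟩ := ih
      obtain ⟨e, he, heL⟩ := hcon L hL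
      by_cases hcl : ClosedGr H G c (G ⊔ fromEdgeSet {e | e ∈ L})
      · exfalso
        have htop := h _ hcl
        induction e using Sym2.ind with
        | _ u v =>
        have hne : u ≠ v := by rintro rfl; simp at he
        have h2 : (G ⊔ fromEdgeSet {e | e ∈ L}).Adj u v := by rw [htop]; exact hne
        rcases h2 with h2 | h2
        · simp at he; exact he.2 h2
        · exact heL h2.1
      · rw [ClosedGr, not_and] at hcl
        have := hcl le_sup_left
        push Not at this
        obtain ⟨u, v, huv, hχ, hnadj⟩ := this
        have hnL : s(u, v) ∉ L := fun hm => hnadj (Or.inr ⟨hm, huv⟩)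
        have hnG : s(u, v) ∈ Gᶜ.edgeSet := by
          simp only [mem_edgeSet, compl_adj]
          exact ⟨huv, fun hm => hnadj (Or.inl hm)⟩
        refine ⟨L ++ [s(u, v)], ⟨?_, ?_, ?_⟩, by simp [hn]⟩
        · rw [List.nodup_append]
          refine ⟨hL.1, by simp, ?_⟩
          intro a ha b hb
          simp at hb; subst hb; rintro rfl; exact hnL ha
        · intro e he
          rw [List.mem_append, List.mem_singleton] at he
          rcases he with he | rfl
          · exact hL.2.1 e he
          · exact hnG
        · intro χ hv i
          obtain ⟨i, hi⟩ := i
          rw [List.length_append, List.length_singleton] at hi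
          by_cases hi' : i < L.length
          · have := hL.2.2 χ hv ⟨i, hi'⟩
            simp only [List.get_eq_getElem] at this ⊢
            rw [List.getElem_append_left hi', List.take_append_of_le_length (by omega)]
            exact this
          · have hi2 : i = L.length := by omega
            subst hi2
            have := hχ χ hv
            simp only [List.get_eq_getElem]
            rw [List.getElem_append_right (by omega)]
            simp only [Nat.sub_self, List.getElem_cons_zero]
            refine copy_mono this ?_ (fun _ _ => rfl)
            rw [List.take_of_length_le (by simp)]
            rw [sup_assoc]
            refine sup_le_sup_left (sup_le ?_ ?_) _
            · apply fromEdgeSet_mono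
              intro x hx; simp at hx ⊢; exact Or.inl hx
            · apply fromEdgeSet_mono
              intro x hx; simp at hx ⊢; exact Or.inr hx
  obtain ⟨L, hL, hn⟩ := key (Fintype.card (Sym2 V) + 1)
  have := hL.1.length_le_card
  omega

lemma wrs_of_satC {W V : Type*} [Fintype V] [DecidableEq V] {H : SimpleGraph W}
    {G : SimpleGraph V} {c : Sym2 V → ℕ} (h : SatC H G c) : WeaklyRainbowSat H G c := by
  obtain ⟨L, ⟨hnd, hLs, hL⟩, hall⟩ := exists_goodList h
  refine ⟨L, hnd, fun e => ⟨hLs e, hall e⟩, ?_⟩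
  intro cs hlen hcs i
  obtain ⟨χ0, rfl⟩ := exists_map_eq L hnd cs hlen
  have hGL : ∀ e ∈ G.edgeSet, e ∉ L := by
    intro e he heL
    have := hLs e heL
    induction e using Sym2.ind with
    | _ u v => simp at this he; exact this.2 he
  have hv : ValidCol G c (fun e => if e ∈ L then χ0 e else c e) := by
    refine ⟨fun e he => by simp [hGL e he], ?_⟩
    intro x hx y hy hxy
    simp only [hall x hx, hall y hy, if_true] at hxy
    exact List.inj_on_of_nodup_map hcs (hall x hx) (hall y hy) hxy
  refine copy_mono (hL _ hv i) le_rfl ?_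
  intro e he
  rw [zip_take_map, foldl_upd]
  rw [edgeSet_sup, edgeSet_fromEdgeSet] at he
  by_cases h1 : e ∈ L.take (i + 1)
  · simp [h1, List.mem_of_mem_take h1]
  · rcases he with he | he
    · simp [h1, hGL e he]
    · exact absurd he.1 h1

lemma closed_embed {W A V : Type*} {H : SimpleGraph W} {G : SimpleGraph V} {c : Sym2 V → ℕ}
    {P : SimpleGraph V} (hP : ClosedGr H G c P) (a : A → V) (ha : Function.Injective a)
    {G1 : SimpleGraph A} {c1 : Sym2 A → ℕ} (hG : ∀ x y, G.Adj (a x) (a y) ↔ G1.Adj x y)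
    (hc : ∀ e, c (Sym2.map a e) = c1 e) (h1 : SatC H G1 c1) :
    ∀ x y, x ≠ y → P.Adj (a x) (a y) := by
  have : ClosedGr H G1 c1 (P.comap a) := by
    refine ⟨fun x y hxy => hP.1 ((hG x y).2 hxy), fun u v huv hχ => ?_⟩
    refine hP.2 _ _ (ha.ne huv) fun χ hv => ?_
    have hm : ∀ e, Sym2.map a e ∈ G.edgeSet ↔ e ∈ G1.edgeSet := by
      intro e
      induction e using Sym2.ind with
      | _ x y => exact hG x y
    have hm' : ∀ e, e ∈ G1ᶜ.edgeSet → Sym2.map a e ∈ Gᶜ.edgeSet := by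
      intro e he
      induction e using Sym2.ind with
      | _ x y =>
        simp only [mem_edgeSet, compl_adj, Sym2.map_mk] at he ⊢
        exact ⟨ha.ne he.1, fun h => he.2 ((hG x y).1 h)⟩
    have hv1 : ValidCol G1 c1 (fun e => χ (Sym2.map a e)) := by
      refine ⟨fun e he => ?_, fun e he e' he' hee => ?_⟩
      · show χ (Sym2.map a e) = _
        rw [hv.1 _ ((hm e).2 he), hc]
      · exact Sym2.map.injective ha (hv.2 (hm' e he) (hm' e' he') hee)
    obtain ⟨f, hf, k1, k2, x, y, hxy, he⟩ := hχ _ hv1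
    refine ⟨a ∘ f, ha.comp hf, ?_, ?_, x, y, hxy, ?_⟩
    · intro p q hpq
      rcases k1 hpq with h | h
      · exact Or.inl h
      · refine Or.inr ?_
        rw [edge_adj] at h ⊢
        refine ⟨?_, (ha.ne h.2)⟩
        rcases h.1 with ⟨h, h'⟩ | ⟨h, h'⟩ <;> simp [h, h']
    · intro p q p' q' hpq hpq' heq
      exact k2 hpq hpq' heq
    · have := congrArg (Sym2.map a) he
      simpa using this
  intro x y hxy
  have h2 := h1 _ this
  have : (P.comap a).Adj x y := by rw [h2]; exact hxy
  exact this

/-- rainbow clique minus an edge -/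
lemma copy_of_clique {W V : Type*} [Fintype W] {H : SimpleGraph W} (hH : H.edgeSet.Nonempty)
    {P : SimpleGraph V} {χ : Sym2 V → ℕ} {u v : V} (huv : u ≠ v) (T : Finset V)
    (hT : Fintype.card W ≤ T.card) (hu : u ∉ T) (hv : v ∉ T)
    (huT : ∀ t ∈ T, P.Adj u t) (hvT : ∀ t ∈ T, P.Adj v t)
    (hTT : ∀ t ∈ T, ∀ t' ∈ T, t ≠ t' → P.Adj t t')
    (hχ : ∀ x y x' y', (x = u ∨ x = v ∨ x ∈ T) → (y = u ∨ y = v ∨ y ∈ T) →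
      (x' = u ∨ x' = v ∨ x' ∈ T) → (y' = u ∨ y' = v ∨ y' ∈ T) → x ≠ y → x' ≠ y' →
      χ s(x, y) = χ s(x', y') → s(x, y) = s(x', y')) :
    IsRainbowCopyThrough H (P ⊔ edge u v) χ s(u, v) := by
  classical
  obtain ⟨e, he⟩ := hH
  induction e using Sym2.ind with
  | _ a b =>
  have hab : H.Adj a b := he
  obtain ⟨g⟩ : Nonempty (W ↪ T) := by
    apply Function.Embedding.nonempty_of_card_le
    simpa using hT
  let f : W → V := fun w => if w = a then u else if w = b then v else g w
  have hfa : f a = u := by simp [f]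
  have hfb : f b = v := by simp [f, hab.ne']
  have hfo : ∀ w, w ≠ a → w ≠ b → f w = g w := fun w h1 h2 => by simp [f, h1, h2]
  have hfr : ∀ w, f w = u ∨ f w = v ∨ f w ∈ T := by
    intro w
    by_cases h1 : w = a
    · subst h1; exact Or.inl hfa
    by_cases h2 : w = b
    · subst h2; exact Or.inr (Or.inl hfb)
    rw [hfo w h1 h2]; exact Or.inr (Or.inr (g w).2)
  have hf : Function.Injective f := by
    intro x y hxy
    by_cases hxa : x = a <;> by_cases hya : y = a <;> by_cases hxb : x = b <;>
      by_cases hyb : y = b <;> simp only [f, hxa, hya, hxb, hyb, if_true, if_false] at hxy ⊢ <;>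
      first
      | (exfalso; exact huv hxy)
      | (exfalso; exact huv hxy.symm)
      | (exfalso; exact hu (hxy ▸ (g _).2))
      | (exfalso; exact hv (hxy ▸ (g _).2))
      | (exact g.injective (Subtype.ext hxy))
      | grind
  have hadj : ∀ x y, (x = u ∨ x = v ∨ x ∈ T) → (y = u ∨ y = v ∨ y ∈ T) → x ≠ y →
      (P ⊔ edge u v).Adj x y := by
    rintro x y hx hy hxy
    have e1 : (P ⊔ edge u v).Adj u v := Or.inr (by rw [edge_adj]; simp [huv])
    rcases hx with rfl | rfl | hx <;> rcases hy with rfl | rfl | hy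
    · exact absurd rfl hxy
    · exact e1
    · exact Or.inl (huT _ hy)
    · exact e1.symm
    · exact absurd rfl hxy
    · exact Or.inl (hvT _ hy)
    · exact Or.inl (huT _ hx).symm
    · exact Or.inl (hvT _ hx).symm
    · exact Or.inl (hTT _ hx _ hy hxy)
  refine ⟨f, hf, fun x y hxy => hadj _ _ (hfr x) (hfr y) (hf.ne hxy.ne), ?_,
    a, b, hab, by rw [hfa, hfb]⟩
  intro x y x' y' hxy hxy' h
  have := hχ _ _ _ _ (hfr x) (hfr y) (hfr x') (hfr y') (hf.ne hxy.ne) (hf.ne hxy'.ne) h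
  exact Sym2.map.injective hf (by simpa using this)

/-- forcing by added edges -/
lemma force_added {W V : Type*} [Fintype W] {H : SimpleGraph W} (hH : H.edgeSet.Nonempty)
    {G : SimpleGraph V} {c : Sym2 V → ℕ} {P : SimpleGraph V} (hP : ClosedGr H G c P)
    {u v : V} (huv : u ≠ v) (T : Finset V)
    (hT : Fintype.card W ≤ T.card)
    (huT : ∀ t ∈ T, P.Adj u t) (hvT : ∀ t ∈ T, P.Adj v t)
    (hTT : ∀ t ∈ T, ∀ t' ∈ T, t ≠ t' → P.Adj t t')
    (guv : ¬ G.Adj u v) (guT : ∀ t ∈ T, ¬ G.Adj u t) (gvT : ∀ t ∈ T, ¬ G.Adj v t)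
    (gTT : ∀ t ∈ T, ∀ t' ∈ T, ¬ G.Adj t t') : P.Adj u v := by
  refine hP.2 u v huv fun χ hχ => ?_
  refine copy_of_clique hH huv T hT (fun h => (huT u h).ne rfl) (fun h => (hvT v h).ne rfl)
    huT hvT hTT ?_
  have hn : ∀ x y, (x = u ∨ x = v ∨ x ∈ T) → (y = u ∨ y = v ∨ y ∈ T) → x ≠ y →
      s(x, y) ∈ Gᶜ.edgeSet := by
    intro x y hx hy hxy
    rw [mem_edgeSet, compl_adj]
    refine ⟨hxy, ?_⟩
    rcases hx with rfl | rfl | hx <;> rcases hy with rfl | rfl | hy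
    · exact absurd rfl hxy
    · exact guv
    · exact guT _ hy
    · exact fun h => guv h.symm
    · exact absurd rfl hxy
    · exact gvT _ hy
    · exact fun h => guT _ hx h.symm
    · exact fun h => gvT _ hx h.symm
    · exact gTT _ hx _ hy
  intro x y x' y' hx hy hx' hy' hne hne' h
  exact hχ.2 (hn x y hx hy hne) (hn x' y' hx' hy' hne') h

/-- forcing by a rainbow clique of original edges -/
lemma force_orig {W V : Type*} [Fintype W] {H : SimpleGraph W} (hH : H.edgeSet.Nonempty)
    {G : SimpleGraph V} {c : Sym2 V → ℕ} {P : SimpleGraph V} (hP : ClosedGr H G c P)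
    {u v : V} (huv : u ≠ v) (T : Finset V)
    (hT : Fintype.card W + 1 ≤ T.card)
    (huT : ∀ t ∈ T, G.Adj u t) (hvT : ∀ t ∈ T, G.Adj v t)
    (hTT : ∀ t ∈ T, ∀ t' ∈ T, t ≠ t' → G.Adj t t')
    (S : Set (Sym2 V)) (hS : Set.InjOn c S) (hS1 : ∀ t ∈ T, ∀ x, x ≠ t → s(x, t) ∈ S) :
    P.Adj u v := by
  classical
  refine hP.2 u v huv fun χ hχ => ?_
  have hu : u ∉ T := fun h => (huT u h).ne rfl
  have hv : v ∉ T := fun h => (hvT v h).ne rfl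
  have hpair : ∀ x y, (x = u ∨ x = v ∨ x ∈ T) → (y = u ∨ y = v ∨ y ∈ T) → x ≠ y →
      s(x, y) = s(u, v) ∨ (s(x, y) ∈ G.edgeSet ∧ s(x, y) ∈ S ∧ (x ∈ T ∨ y ∈ T)) := by
    intro x y hx hy hxy
    rcases hx with rfl | rfl | hx <;> rcases hy with rfl | rfl | hy
    · exact absurd rfl hxy
    · exact Or.inl rfl
    · exact Or.inr ⟨huT _ hy, hS1 _ hy _ hxy, Or.inr hy⟩
    · exact Or.inl Sym2.eq_swap
    · exact absurd rfl hxy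
    · exact Or.inr ⟨hvT _ hy, hS1 _ hy _ hxy, Or.inr hy⟩
    · exact Or.inr ⟨(huT _ hx).symm, by rw [Sym2.eq_swap]; exact hS1 _ hx _ hxy.symm, Or.inl hx⟩
    · exact Or.inr ⟨(hvT _ hx).symm, by rw [Sym2.eq_swap]; exact hS1 _ hx _ hxy.symm, Or.inl hx⟩
    · exact Or.inr ⟨hTT _ hx _ hy hxy, hS1 _ hy _ hxy, Or.inr hy⟩
  have hinj : ∀ e e', e ∈ G.edgeSet → e ∈ S → e' ∈ G.edgeSet → e' ∈ S → χ e = χ e' → e = e' := by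
    intro e e' h1 h2 h3 h4 h
    rw [hχ.1 e h1, hχ.1 e' h3] at h
    exact hS h2 h4 h
  obtain ⟨T', hT'T, hT', hbad⟩ : ∃ T' ⊆ T, Fintype.card W ≤ T'.card ∧
      ∀ x y, (x = u ∨ x = v ∨ x ∈ T') → (y = u ∨ y = v ∨ y ∈ T') → x ≠ y →
        χ s(x, y) = χ s(u, v) → s(x, y) = s(u, v) := by
    by_cases hex : ∃ x y, (x = u ∨ x = v ∨ x ∈ T) ∧ (y = u ∨ y = v ∨ y ∈ T) ∧ x ≠ y ∧
        χ s(x, y) = χ s(u, v) ∧ s(x, y) ≠ s(u, v)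
    · obtain ⟨x, y, hx, hy, hxy, h, hne⟩ := hex
      obtain ⟨g1, g2, g3⟩ := (hpair x y hx hy hxy).resolve_left hne
      obtain ⟨t, ht, htm⟩ : ∃ t ∈ T, t ∈ s(x, y) := by
        rcases g3 with g3 | g3
        · exact ⟨x, g3, by simp⟩
        · exact ⟨y, g3, by simp⟩
      refine ⟨T.erase t, Finset.erase_subset _ _, by rw [Finset.card_erase_of_mem ht]; omega, ?_⟩
      intro x' y' hx' hy' hxy' h'
      by_contra hne'
      have tx : ∀ z, (z = u ∨ z = v ∨ z ∈ T.erase t) → (z = u ∨ z = v ∨ z ∈ T) ∧ z ≠ t := by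
        rintro z (rfl | rfl | hz)
        · exact ⟨Or.inl rfl, fun h => hu (h ▸ ht)⟩
        · exact ⟨Or.inr (Or.inl rfl), fun h => hv (h ▸ ht)⟩
        · exact ⟨Or.inr (Or.inr (Finset.mem_of_mem_erase hz)), Finset.ne_of_mem_erase hz⟩
      obtain ⟨k1, k2, k3⟩ := (hpair x' y' (tx _ hx').1 (tx _ hy').1 hxy').resolve_left hne'
      have := hinj _ _ g1 g2 k1 k2 (h.trans h'.symm)
      rw [this, Sym2.mem_iff] at htm
      rcases htm with rfl | rfl
      · exact (tx _ hx').2 rfl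
      · exact (tx _ hy').2 rfl
    · push Not at hex
      exact ⟨T, subset_rfl, by omega, hex⟩
  refine copy_of_clique hH huv T' hT' (fun h => hu (hT'T h)) (fun h => hv (hT'T h))
    (fun t ht => hP.1 (huT t (hT'T ht))) (fun t ht => hP.1 (hvT t (hT'T ht)))
    (fun t ht t' ht' h => hP.1 (hTT t (hT'T ht) t' (hT'T ht') h)) ?_
  intro x y x' y' hx hy hx' hy' hne hne' h
  have tx : ∀ z, (z = u ∨ z = v ∨ z ∈ T') → (z = u ∨ z = v ∨ z ∈ T) := by
    rintro z (h | h | h)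
    · exact Or.inl h
    · exact Or.inr (Or.inl h)
    · exact Or.inr (Or.inr (hT'T h))
  rcases hpair x y (tx _ hx) (tx _ hy) hne with h1 | ⟨h1, h2, -⟩
  · rw [h1] at h ⊢
    exact (hbad _ _ hx' hy' hne' h.symm).symm
  · rcases hpair x' y' (tx _ hx') (tx _ hy') hne' with h1' | ⟨h1', h2', -⟩
    · rw [h1'] at h ⊢
      exact hbad _ _ hx hy hne h
    · exact hinj _ _ h1 h2 h1' h2' h

/-- adjacency of the glued graph -/
def glueAdj {A B ι : Type*} (G1 : SimpleGraph A) (G2 : SimpleGraph B) (X : Finset A)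
    (R : Bool → Finset A) (Y : Finset B) : (A ⊕ B) ⊕ (Bool × ι) → (A ⊕ B) ⊕ (Bool × ι) → Prop
  | .inl (.inl x), .inl (.inl y) => G1.Adj x y
  | .inl (.inr x), .inl (.inr y) => G2.Adj x y
  | .inl (.inl _), .inl (.inr _) => False
  | .inl (.inr _), .inl (.inl _) => False
  | .inr z, .inr z' => z ≠ z'
  | .inl (.inl x), .inr z => x ∈ X ∧ x ∉ R z.1
  | .inr z, .inl (.inl x) => x ∈ X ∧ x ∉ R z.1
  | .inl (.inr y), .inr _ => y ∈ Y
  | .inr _, .inl (.inr y) => y ∈ Y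

/-- the glued graph -/
def glue {A B : Type*} (ι : Type*) (G1 : SimpleGraph A) (G2 : SimpleGraph B) (X : Finset A)
    (R : Bool → Finset A) (Y : Finset B) : SimpleGraph ((A ⊕ B) ⊕ (Bool × ι)) where
  Adj := glueAdj G1 G2 X R Y
  symm := ⟨by
    rintro ((x | x) | x) ((y | y) | y) h <;> simp only [glueAdj] at h ⊢ <;>
      first
      | exact h
      | exact h.symm⟩
  loopless := ⟨by
    rintro ((x | x) | x) h <;> simp [glueAdj] at h⟩

lemma glue_sat {W A B ι : Type*} [Fintype W] [Fintype A] [Fintype B] [Fintype ι]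
    {H : SimpleGraph W}
    (hH : H.edgeSet.Nonempty) (G1 : SimpleGraph A) (G2 : SimpleGraph B)
    (c1 : Sym2 A → ℕ) (c2 : Sym2 B → ℕ) (h1 : SatC H G1 c1) (h2 : SatC H G2 c2)
    (X : Finset A) (R : Bool → Finset A) (Y S : Finset B)
    (hRX : ∀ i, R i ⊆ X) (hdis : ∀ i, ∀ x ∈ R i, x ∉ R (!i))
    (hRcard : ∀ i, Fintype.card W ≤ (R i).card)
    (hRind : ∀ i, ∀ x ∈ R i, ∀ y ∈ R i, ¬ G1.Adj x y)
    (hX : ∀ i, ∀ x, x ∉ X → ∀ r ∈ R i, ¬ G1.Adj x r)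
    (hSY : S ⊆ Y) (hScard : Fintype.card W ≤ S.card)
    (hSind : ∀ x ∈ S, ∀ y ∈ S, ¬ G2.Adj x y)
    (hY : ∀ y, y ∉ Y → ∀ r ∈ S, ¬ G2.Adj y r)
    (hι : Fintype.card W + 1 ≤ Fintype.card ι) :
    ∃ c, SatC H (glue ι G1 G2 X R Y) c := by
  classical
  let a : A → (A ⊕ B) ⊕ (Bool × ι) := fun x => .inl (.inl x)
  let b : B → (A ⊕ B) ⊕ (Bool × ι) := fun x => .inl (.inr x)
  let z : Bool × ι → (A ⊕ B) ⊕ (Bool × ι) := fun x => .inr x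
  have ha : Function.Injective a := fun x y h => by simpa [a] using h
  have hb : Function.Injective b := fun x y h => by simpa [b] using h
  have hz : Function.Injective z := fun x y h => by simpa [z] using h
  have hab : ∀ x y, a x ≠ b y := fun x y h => by simp [a, b] at h
  have haz : ∀ x y, a x ≠ z y := fun x y h => by simp [a, z] at h
  have hbz : ∀ x y, b x ≠ z y := fun x y h => by simp [z, b] at h
  obtain ⟨c0, hc0⟩ : ∃ c0 : Sym2 ((A ⊕ B) ⊕ (Bool × ι)) → ℕ, Function.Injective c0 :=
    ⟨fun e => (Fintype.equivFin _ e : ℕ), fun x y h => by simpa [Fin.val_inj] using h⟩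
  let c := Function.extend (Sym2.map a) c1 (Function.extend (Sym2.map b) c2 c0)
  have hca : ∀ e, c (Sym2.map a e) = c1 e := fun e =>
    (Sym2.map.injective ha).extend_apply _ _ _
  have hcb : ∀ e, c (Sym2.map b e) = c2 e := by
    intro e
    have : ¬ ∃ e', Sym2.map a e' = Sym2.map b e := by
      rintro ⟨e', h⟩
      induction e using Sym2.ind with
      | _ x y =>
      induction e' using Sym2.ind with
      | _ x' y' => simp [a, b] at h
    simp only [c]
    rw [Function.extend_apply' _ _ _ this, (Sym2.map.injective hb).extend_apply]
  let Sg : Set (Sym2 ((A ⊕ B) ⊕ (Bool × ι))) :=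
    {e | (¬ ∃ e', Sym2.map a e' = e) ∧ (¬ ∃ e', Sym2.map b e' = e)}
  have hSg : Set.InjOn c Sg := by
    intro e he e' he' h
    simp only [c] at h
    rw [Function.extend_apply' _ _ _ he.1, Function.extend_apply' _ _ _ he.2,
      Function.extend_apply' _ _ _ he'.1, Function.extend_apply' _ _ _ he'.2] at h
    exact hc0 h
  have hSgz : ∀ w x, s(x, z w) ∈ Sg := by
    intro w x
    constructor
    · rintro ⟨e, he⟩
      have : z w ∈ Sym2.map a e := by rw [he]; simp
      rw [Sym2.mem_map] at this
      obtain ⟨y, -, hy⟩ := this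
      exact haz _ _ hy
    · rintro ⟨e, he⟩
      have : z w ∈ Sym2.map b e := by rw [he]; simp
      rw [Sym2.mem_map] at this
      obtain ⟨y, -, hy⟩ := this
      exact hbz _ _ hy
  refine ⟨c, fun P hP => ?_⟩
  set G := glue ι G1 G2 X R Y with hG
  have gaa : ∀ x y, G.Adj (a x) (a y) ↔ G1.Adj x y := fun x y => Iff.rfl
  have gbb : ∀ x y, G.Adj (b x) (b y) ↔ G2.Adj x y := fun x y => Iff.rfl
  have gab : ∀ x y, ¬ G.Adj (a x) (b y) := fun x y h => h
  have gba : ∀ x y, ¬ G.Adj (b x) (a y) := fun x y h => h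
  have gaz : ∀ x y, G.Adj (a x) (z y) ↔ (x ∈ X ∧ x ∉ R y.1) := fun x y => Iff.rfl
  have gza : ∀ x y, G.Adj (z y) (a x) ↔ (x ∈ X ∧ x ∉ R y.1) := fun x y => Iff.rfl
  have gbz : ∀ x y, G.Adj (b x) (z y) ↔ x ∈ Y := fun x y => Iff.rfl
  have gzb : ∀ x y, G.Adj (z y) (b x) ↔ x ∈ Y := fun x y => Iff.rfl
  have gzz : ∀ x y, G.Adj (z x) (z y) ↔ x ≠ y := fun x y => Iff.rfl
  have pa := closed_embed hP a ha gaa hca h1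
  have pb := closed_embed hP b hb gbb hcb h2
  let Zs : Bool → Finset ((A ⊕ B) ⊕ (Bool × ι)) := fun i =>
    Finset.univ.image (fun j : ι => z (i, j))
  have Zcard : ∀ i, Fintype.card W + 1 ≤ (Zs i).card := by
    intro i
    rw [Finset.card_image_of_injective]
    · simpa using hι
    · intro j j' h; simpa using hz h
  have Zmem : ∀ i t, t ∈ Zs i → ∃ j, t = z (i, j) := by
    intro i t ht
    simp only [Zs, Finset.mem_image, Finset.mem_univ, true_and] at ht
    obtain ⟨j, hj⟩ := ht
    exact ⟨j, hj.symm⟩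
  have Zforce : ∀ i u v, u ≠ v → (∀ j, G.Adj u (z (i, j))) → (∀ j, G.Adj v (z (i, j))) →
      P.Adj u v := by
    intro i u v huv hu hv
    refine force_orig hH hP huv (Zs i) (Zcard i) ?_ ?_ ?_ Sg hSg ?_
    · intro t ht; obtain ⟨j, rfl⟩ := Zmem i t ht; exact hu j
    · intro t ht; obtain ⟨j, rfl⟩ := Zmem i t ht; exact hv j
    · intro t ht t' ht' hne
      obtain ⟨j, rfl⟩ := Zmem i t ht
      obtain ⟨j', rfl⟩ := Zmem i t' ht'
      exact (gzz _ _).2 fun h => hne (by rw [h])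
    · intro t ht x _
      obtain ⟨j, rfl⟩ := Zmem i t ht
      exact hSgz _ _
  have Rforce : ∀ i u v, u ≠ v → (∀ r ∈ R i, P.Adj u (a r)) → (∀ r ∈ R i, P.Adj v (a r)) →
      ¬ G.Adj u v → (∀ r ∈ R i, ¬ G.Adj u (a r)) → (∀ r ∈ R i, ¬ G.Adj v (a r)) →
      P.Adj u v := by
    intro i u v huv hu hv guv gu gv
    refine force_added hH hP huv ((R i).image a) ?_ ?_ ?_ ?_ guv ?_ ?_ ?_
    · rw [Finset.card_image_of_injective _ ha]; exact hRcard i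
    · simpa using hu
    · simpa using hv
    · simp only [Finset.mem_image]
      rintro _ ⟨r, hr, rfl⟩ _ ⟨r', hr', rfl⟩ hne
      exact pa _ _ fun h => hne (by rw [h])
    · simpa using gu
    · simpa using gv
    · simp only [Finset.mem_image]
      rintro _ ⟨r, hr, rfl⟩ _ ⟨r', hr', rfl⟩
      exact hRind i r hr r' hr'
  have Sforce : ∀ u v, u ≠ v → (∀ r ∈ S, P.Adj u (b r)) → (∀ r ∈ S, P.Adj v (b r)) →
      ¬ G.Adj u v → (∀ r ∈ S, ¬ G.Adj u (b r)) → (∀ r ∈ S, ¬ G.Adj v (b r)) →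
      P.Adj u v := by
    intro u v huv hu hv guv gu gv
    refine force_added hH hP huv (S.image b) ?_ ?_ ?_ ?_ guv ?_ ?_ ?_
    · rw [Finset.card_image_of_injective _ hb]; exact hScard
    · simpa using hu
    · simpa using hv
    · simp only [Finset.mem_image]
      rintro _ ⟨r, hr, rfl⟩ _ ⟨r', hr', rfl⟩ hne
      exact pb _ _ fun h => hne (by rw [h])
    · simpa using gu
    · simpa using gv
    · simp only [Finset.mem_image]
      rintro _ ⟨r, hr, rfl⟩ _ ⟨r', hr', rfl⟩
      exact hSind r hr r' hr'
  have pXY : ∀ x ∈ X, ∀ y ∈ Y, P.Adj (a x) (b y) := by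
    intro x hx y hy
    by_cases hxt : x ∈ R true
    · exact Zforce false _ _ (hab x y) (fun j => (gaz _ _).2 ⟨hx, hdis true x hxt⟩)
        (fun j => (gbz _ _).2 hy)
    · exact Zforce true _ _ (hab x y) (fun j => (gaz _ _).2 ⟨hx, hxt⟩)
        (fun j => (gbz _ _).2 hy)
  have pzR : ∀ i j, ∀ r ∈ R i, P.Adj (z (i, j)) (a r) := by
    intro i j r hr
    refine Zforce (!i) _ _ (haz _ _).symm (fun j' => (gzz _ _).2 ?_)
      (fun j' => (gaz _ _).2 ⟨hRX i hr, hdis i r hr⟩)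
    intro h
    have := congrArg Prod.fst h
    simp at this
  have pXv : ∀ x ∈ X, ∀ v, P.Adj (a x) (b v) := by
    intro x hx v
    by_cases hv : v ∈ Y
    · exact pXY x hx v hv
    refine Sforce _ _ (hab x v) (fun r hr => pXY x hx r (hSY hr))
      (fun r hr => pb _ _ fun h => hv (h ▸ hSY hr)) (gab _ _) (fun r _ => gab _ _)
      (fun r hr => hY v hv r hr)
  have pab : ∀ u v, P.Adj (a u) (b v) := by
    intro u v
    by_cases hu : u ∈ X
    · exact pXv u hu v
    exact Rforce true _ _ (hab u v) (fun r hr => pa _ _ fun h => hu (h ▸ hRX _ hr))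
      (fun r hr => (pXv r (hRX _ hr) v).symm) (gab _ _) (fun r hr => hX true u hu r hr)
      (fun r _ => gba _ _)
  have pza : ∀ w x, P.Adj (z w) (a x) := by
    rintro ⟨i, j⟩ x
    by_cases hx : x ∈ X
    · by_cases hr : x ∈ R i
      · exact pzR i j x hr
      · exact hP.1 ((gza _ _).2 ⟨hx, hr⟩)
    · refine Rforce i _ _ (haz _ _).symm (pzR i j)
        (fun r hr => pa _ _ fun h => hx (h ▸ hRX _ hr)) (fun h => hx ((gza _ _).1 h).1)
        (fun r hr h => ((gza _ _).1 h).2 hr) (fun r hr => hX i x hx r hr)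
  have pzb : ∀ w y, P.Adj (z w) (b y) := by
    rintro ⟨i, j⟩ y
    by_cases hy : y ∈ Y
    · exact hP.1 ((gzb _ _).2 hy)
    · exact Rforce i _ _ (hbz _ _).symm (pzR i j) (fun r hr => (pab _ _).symm)
        (fun h => hy ((gzb _ _).1 h)) (fun r hr h => ((gza _ _).1 h).2 hr) (fun r hr => gba _ _)
  rw [eq_top_iff]
  rintro ((x | x) | x) ((y | y) | y) hne
  · exact pa x y fun h => hne (by rw [h])
  · exact pab x y
  · exact (pza y x).symm
  · exact (pab y x).symm
  · exact pb x y fun h => hne (by rw [h])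
  · exact (pzb y x).symm
  · exact pza x y
  · exact pzb x y
  · exact hP.1 ((gzz _ _).2 fun h => hne (by rw [h]))

lemma glue_card {A B ι : Type*} [Fintype A] [Fintype B] [Fintype ι]
    (G1 : SimpleGraph A) (G2 : SimpleGraph B)
    (X : Finset A) (R : Bool → Finset A) (Y : Finset B) :
    (glue ι G1 G2 X R Y).edgeSet.ncard ≤ G1.edgeSet.ncard + G2.edgeSet.ncard +
      (X.card + Y.card + 2 * Fintype.card ι) ^ 2 := by
  classical
  let a : A → (A ⊕ B) ⊕ (Bool × ι) := fun x => .inl (.inl x)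
  let b : B → (A ⊕ B) ⊕ (Bool × ι) := fun x => .inl (.inr x)
  let z : Bool × ι → (A ⊕ B) ⊕ (Bool × ι) := fun x => .inr x
  let U : Finset ((A ⊕ B) ⊕ (Bool × ι)) := X.image a ∪ Y.image b ∪ Finset.univ.image z
  have hU : U.card ≤ X.card + Y.card + 2 * Fintype.card ι := by
    refine (Finset.card_union_le _ _).trans (add_le_add ((Finset.card_union_le _ _).trans
      (add_le_add Finset.card_image_le Finset.card_image_le)) ?_)
    refine Finset.card_image_le.trans ?_
    simp
  have hsub : (glue ι G1 G2 X R Y).edgeSet ⊆ (Sym2.map a '' G1.edgeSet ∪ Sym2.map b '' G2.edgeSet) ∪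
      (((U ×ˢ U).image (fun p => s(p.1, p.2)) : Finset _) : Set (Sym2 ((A ⊕ B) ⊕ (Bool × ι)))) := by
    intro e he
    induction e using Sym2.ind with
    | _ u v =>
    have hUU : u ∈ U → v ∈ U → s(u, v) ∈
        (((U ×ˢ U).image (fun p => s(p.1, p.2)) : Finset _) : Set (Sym2 ((A ⊕ B) ⊕ (Bool × ι)))) := by
      intro hu hv
      rw [Finset.mem_coe, Finset.mem_image]
      exact ⟨(u, v), Finset.mk_mem_product hu hv, rfl⟩
    have za : ∀ x ∈ X, a x ∈ U := fun x hx => by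
      simp only [U, Finset.mem_union]; exact Or.inl (Or.inl (Finset.mem_image_of_mem a hx))
    have zb : ∀ x ∈ Y, b x ∈ U := fun x hx => by
      simp only [U, Finset.mem_union]; exact Or.inl (Or.inr (Finset.mem_image_of_mem b hx))
    have zz : ∀ w, z w ∈ U := fun x => by simp [U]
    have he' : glueAdj G1 G2 X R Y u v := he
    rcases u with (x | x) | x <;> rcases v with (y | y) | y <;> simp only [glueAdj] at he'
    · exact Or.inl (Or.inl ⟨s(x, y), he', rfl⟩)
    · exact Or.inr (hUU (za _ he'.1) (zz _))
    · exact Or.inl (Or.inr ⟨s(x, y), he', rfl⟩)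
    · exact Or.inr (hUU (zb _ he') (zz _))
    · exact Or.inr (hUU (zz _) (za _ he'.1))
    · exact Or.inr (hUU (zz _) (zb _ he'))
    · exact Or.inr (hUU (zz _) (zz _))
  refine (Set.ncard_le_ncard hsub (Set.toFinite _)).trans ?_
  refine (Set.ncard_union_le _ _).trans (add_le_add ((Set.ncard_union_le _ _).trans
    (add_le_add (Set.ncard_image_le (Set.toFinite _)) (Set.ncard_image_le (Set.toFinite _)))) ?_)
  rw [Set.ncard_coe_finset]
  refine Finset.card_image_le.trans ?_
  rw [Finset.card_product, ← sq]
  exact Nat.pow_le_pow_left hU 2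

lemma rwsat_attained {W : Type*} (H : SimpleGraph W) (n : ℕ) :
    ∃ (G : SimpleGraph (Fin n)) (c : Sym2 (Fin n) → ℕ), SatC H G c ∧
      G.edgeSet.ncard = rwsat H n := by
  have hne : ({m | ∃ (G : SimpleGraph (Fin n)) (c : Sym2 (Fin n) → ℕ),
    WeaklyRainbowSat H G c ∧ G.edgeSet.ncard = m} ∪ {n.choose 2}).Nonempty := ⟨_, Or.inr rfl⟩
  rcases Nat.sInf_mem hne with h | h
  · obtain ⟨G, c, h1, h2⟩ := h
    exact ⟨G, c, satC_of_wrs h1, h2⟩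
  · refine ⟨⊤, fun _ => 0, fun P hP => top_le_iff.1 hP.1, ?_⟩
    have h' : rwsat H n = n.choose 2 := h
    rw [h', Set.ncard_eq_toFinset_card']
    have := card_edgeFinset_top_eq_card_choose_two (V := Fin n)
    simpa [edgeFinset] using this

lemma rwsat_le {W V : Type*} [Fintype V] {H : SimpleGraph W} {G : SimpleGraph V}
    {c : Sym2 V → ℕ} (h : SatC H G c) : rwsat H (Fintype.card V) ≤ G.edgeSet.ncard := by
  classical
  let φ := (Fintype.equivFin V).symm
  apply Nat.sInf_le
  left
  refine ⟨G.comap φ, fun e => c (Sym2.map φ e), wrs_of_satC ?_, ?_⟩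
  · intro P hP
    have := closed_embed hP φ.symm φ.symm.injective (G1 := G) (c1 := c) (by simp)
      (by intro e; simp [Sym2.map_map]) h
    rw [eq_top_iff]
    intro x y hxy
    have := this (φ x) (φ y) (φ.injective.ne hxy)
    simpa using this
  · have : (G.comap φ).edgeSet = Sym2.map φ ⁻¹' G.edgeSet := by
      ext e
      induction e using Sym2.ind with
      | _ x y => simp
    rw [this]
    apply Set.ncard_preimage_of_injective_subset_range (Sym2.map.injective φ.injective)
    intro e _
    exact ⟨Sym2.map φ.symm e, by simp [Sym2.map_map]⟩

lemma rwsat_linear {W : Type*} [Fintype W] (H : SimpleGraph W) (hH : H.edgeSet.Nonempty)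
    (n : ℕ) : rwsat H n ≤ (Fintype.card W + 1) * n := by
  classical
  set k := Fintype.card W + 1 with hk
  let T : Finset (Fin n) := Finset.univ.filter (fun x => (x : ℕ) < k)
  have hTle : T.card ≤ k := by
    have : T.card ≤ (Finset.range k).card := by
      refine Finset.card_le_card_of_injOn (fun x => (x : ℕ)) ?_ ?_
      · intro x hx; simpa [T] using hx
      · intro x _ y _ h; exact Fin.ext h
    simpa using this
  let G : SimpleGraph (Fin n) :=
    { Adj := fun x y => x ≠ y ∧ (x ∈ T ∨ y ∈ T)
      symm := ⟨fun x y h => ⟨h.1.symm, h.2.symm⟩⟩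
      loopless := ⟨fun x h => h.1 rfl⟩ }
  obtain ⟨c0, hc0⟩ : ∃ c0 : Sym2 (Fin n) → ℕ, Function.Injective c0 :=
    ⟨fun e => (Fintype.equivFin _ e : ℕ), fun x y h => by simpa [Fin.val_inj] using h⟩
  have hsat : SatC H G c0 := by
    intro P hP
    rw [eq_top_iff]
    intro u v huv
    by_cases hadj : G.Adj u v
    · exact hP.1 hadj
    have hu : u ∉ T := fun h => hadj ⟨huv, Or.inl h⟩
    have hv : v ∉ T := fun h => hadj ⟨huv, Or.inr h⟩
    have hkn : k ≤ n := by
      have : ¬ (u : ℕ) < k := by simpa [T] using hu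
      have := u.2
      omega
    refine force_orig hH hP huv T ?_ ?_ ?_ ?_ Set.univ hc0.injOn (fun _ _ _ _ => trivial)
    · have : (Finset.univ : Finset (Fin k)).card ≤ T.card := by
        refine Finset.card_le_card_of_injOn (fun x => Fin.castLE hkn x) ?_ ?_
        · intro x _; simp [T]
        · intro x _ y _ h; exact Fin.castLE_injective hkn h
      rw [Finset.card_univ, Fintype.card_fin] at this
      exact this
    · intro t ht; exact ⟨fun h => hu (h ▸ ht), Or.inr ht⟩
    · intro t ht; exact ⟨fun h => hv (h ▸ ht), Or.inr ht⟩
    · intro t ht t' ht' h; exact ⟨h, Or.inl ht⟩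
  have h1 := rwsat_le hsat
  rw [Fintype.card_fin] at h1
  refine h1.trans ?_
  have hsub : G.edgeSet ⊆
      (((T ×ˢ Finset.univ).image (fun p => s(p.1, p.2)) : Finset _) : Set (Sym2 (Fin n))) := by
    intro e he
    induction e using Sym2.ind with
    | _ u v =>
    rw [Finset.mem_coe, Finset.mem_image]
    have he' : u ≠ v ∧ (u ∈ T ∨ v ∈ T) := he
    rcases he'.2 with h | h
    · exact ⟨(u, v), by simp [h], rfl⟩
    · exact ⟨(v, u), by simp [h], Sym2.eq_swap⟩
  refine (Set.ncard_le_ncard hsub (Set.toFinite _)).trans ?_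
  rw [Set.ncard_coe_finset]
  refine Finset.card_image_le.trans ?_
  rw [Finset.card_product]
  simpa using Nat.mul_le_mul_right n hTle

lemma exists_low_indep {n : ℕ} (G : SimpleGraph (Fin n)) (D r : ℕ)
    (hD : G.edgeSet.ncard ≤ D * n) (hn : 2 * (r * (4 * D + 1)) + 1 ≤ n) :
    ∃ S X : Finset (Fin n), S.card = r ∧ S ⊆ X ∧ X.card ≤ r * (4 * D + 1) ∧
      (∀ x ∈ S, ∀ y ∈ S, ¬ G.Adj x y) ∧ (∀ x, x ∉ X → ∀ y ∈ S, ¬ G.Adj x y) := by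
  classical
  have hE : G.edgeFinset.card ≤ D * n := by
    rwa [Set.ncard_eq_toFinset_card'] at hD
  have hsum : ∑ v, G.degree v ≤ 2 * (D * n) := by
    rw [G.sum_degrees_eq_twice_card_edges]; omega
  let Low : Finset (Fin n) := Finset.univ.filter (fun x => G.degree x ≤ 4 * D)
  let High : Finset (Fin n) := Finset.univ.filter (fun x => ¬ G.degree x ≤ 4 * D)
  have hLH : Low.card + High.card = n := by
    have := Finset.card_filter_add_card_filter_not (s := (Finset.univ : Finset (Fin n)))
      (fun x => G.degree x ≤ 4 * D)
    rw [Finset.card_univ, Fintype.card_fin] at this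
    exact this
  have hHigh : High.card * (4 * D + 1) ≤ 2 * (D * n) := by
    refine le_trans ?_ hsum
    calc High.card * (4 * D + 1) = ∑ v ∈ High, (4 * D + 1) := by simp
      _ ≤ ∑ v ∈ High, G.degree v := by
        refine Finset.sum_le_sum fun v hv => ?_
        simp [High] at hv; omega
      _ ≤ ∑ v, G.degree v := Finset.sum_le_sum_of_subset (Finset.subset_univ _)
  have hLow : n ≤ 2 * Low.card := by
    by_contra hcon
    have h3 : n + 1 ≤ 2 * High.card := by omega
    nlinarith
  let N : Fin n → Finset (Fin n) := fun x => insert x (G.neighborFinset x)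
  have hN : ∀ S ⊆ Low, (S.biUnion N).card ≤ S.card * (4 * D + 1) := by
    intro S hS
    refine Finset.card_biUnion_le_card_mul _ _ _ fun x hx => ?_
    refine (Finset.card_insert_le _ _).trans ?_
    have := hS hx
    simp only [Low, Finset.mem_filter, Finset.mem_univ, true_and] at this
    rw [card_neighborFinset_eq_degree]; omega
  have key : ∀ j ≤ r, ∃ S ⊆ Low, S.card = j ∧ ∀ x ∈ S, ∀ y ∈ S, ¬ G.Adj x y := by
    intro j
    induction j with
    | zero => intro _; exact ⟨∅, by simp, by simp, by simp⟩
    | succ j ih =>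
      intro hj
      obtain ⟨S, hS, hc, hi⟩ := ih (by omega)
      have h1 := hN S hS
      have h2 : S.card * (4 * D + 1) ≤ r * (4 * D + 1) := Nat.mul_le_mul_right _ (by omega)
      obtain ⟨x, hx, hxN⟩ : ∃ x ∈ Low, x ∉ S.biUnion N :=
        Finset.exists_mem_notMem_of_card_lt_card (by omega)
      have hxS : ∀ y ∈ S, x ≠ y ∧ ¬ G.Adj y x := by
        intro y hy
        constructor
        · rintro rfl
          exact hxN (Finset.mem_biUnion.2 ⟨x, hy, by simp [N]⟩)
        · intro h
          exact hxN (Finset.mem_biUnion.2 ⟨y, hy, by simp [N, h]⟩)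
      refine ⟨insert x S, Finset.insert_subset hx hS, ?_, ?_⟩
      · rw [Finset.card_insert_of_notMem (fun h => (hxS x h).1 rfl), hc]
      · intro p hp q hq
        rw [Finset.mem_insert] at hp hq
        rcases hp with rfl | hp <;> rcases hq with rfl | hq
        · exact G.loopless.irrefl _
        · exact fun h => (hxS _ hq).2 h.symm
        · exact (hxS _ hp).2
        · exact hi p hp q hq
  obtain ⟨S, hS, hc, hi⟩ := key r le_rfl
  refine ⟨S, S.biUnion N, hc, ?_, hc ▸ hN S hS, hi, ?_⟩
  · intro x hx
    exact Finset.mem_biUnion.2 ⟨x, hx, by simp [N]⟩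
  · intro x hx y hy h
    exact hx (Finset.mem_biUnion.2 ⟨y, hy, by simp [N, h.symm]⟩)

lemma rwsat_subadd {W : Type*} [Fintype W] (H : SimpleGraph W) (hH : H.edgeSet.Nonempty) :
    ∃ n0 s C : ℕ, ∀ n m, n0 ≤ n → n0 ≤ m → rwsat H (n + m + s) ≤ rwsat H n + rwsat H m + C := by
  classical
  set w := Fintype.card W with hw
  set D := w + 1 with hD
  set K := (2 * w) * (4 * D + 1) with hK
  refine ⟨2 * K + 1, 2 * (w + 1), (K + K + 2 * (w + 1)) ^ 2, ?_⟩
  intro n m hn hm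
  obtain ⟨G1, c1, h1, e1⟩ := rwsat_attained H n
  obtain ⟨G2, c2, h2, e2⟩ := rwsat_attained H m
  obtain ⟨R, X, hRc, hRX, hXc, hRi, hX⟩ := exists_low_indep G1 D (2 * w)
    (e1 ▸ rwsat_linear H hH n) hn
  obtain ⟨S, Y, hSc, hSY, hYc, hSi, hY⟩ := exists_low_indep G2 D (2 * w)
    (e2 ▸ rwsat_linear H hH m) hm
  obtain ⟨R1, hR1, hR1c⟩ := Finset.exists_subset_card_eq (s := R) (n := w) (by omega)
  let RR : Bool → Finset (Fin n) := fun i => if i then R1 else R \ R1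
  have hRR : ∀ i, RR i ⊆ R := by
    intro i; cases i
    · simp [RR]
    · simpa [RR] using hR1
  obtain ⟨c, hc⟩ := glue_sat (ι := Fin (w + 1)) hH G1 G2 c1 c2 h1 h2 X RR Y S
    (fun i => (hRR i).trans hRX)
    (by intro i x hx; cases i <;> simp_all [RR])
    (by
      intro i; cases i
      · have : (R \ R1).card = w := by
          rw [Finset.card_sdiff_of_subset hR1]; omega
        simp [RR, this, hw]
      · simp [RR, hR1c, hw])
    (fun i x hx y hy => hRi x (hRR i hx) y (hRR i hy))
    (fun i x hx r hr => hX x hx r (hRR i hr))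
    hSY (by omega) hSi hY (by simp [hw])
  have hle := rwsat_le hc
  have hcard : Fintype.card ((Fin n ⊕ Fin m) ⊕ (Bool × Fin (w + 1))) = n + m + 2 * (w + 1) := by
    simp
  rw [hcard] at hle
  refine hle.trans ((glue_card _ _ _ _ _).trans ?_)
  rw [e1, e2, Fintype.card_fin]
  gcongr

lemma fekete_like (f : ℕ → ℕ) (D n0 s C : ℕ) (hlin : ∀ n, f n ≤ D * n)
    (hsub : ∀ n m, n0 ≤ n → n0 ≤ m → f (n + m + s) ≤ f n + f m + C) :
    ∃ L : ℝ, Filter.Tendsto (fun n : ℕ => (f n : ℝ) / n) Filter.atTop (nhds L) := by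
  set N := n0 + 2 * s + 1 with hN
  let h : ℕ → ℝ := fun k => if k = 0 then 0 else (f (N * k - s) : ℝ) + C
  have hpos : ∀ k, 1 ≤ k → h k = (f (N * k - s) : ℝ) + C := by
    intro k hk; simp only [h]; rw [if_neg (by omega)]
  have hNk : ∀ k, 1 ≤ k → N ≤ N * k := fun k hk => Nat.le_mul_of_pos_right N hk
  have hsa : Subadditive h := by
    intro k l
    rcases Nat.eq_zero_or_pos k with rfl | hk
    · simp [h]
    rcases Nat.eq_zero_or_pos l with rfl | hl
    · simp [h]
    rw [hpos k hk, hpos l hl, hpos (k + l) (by omega)]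
    have e1 := hNk k hk
    have e2 := hNk l hl
    have := hsub (N * k - s) (N * l - s) (by omega) (by omega)
    have e3 : N * k - s + (N * l - s) + s = N * (k + l) - s := by rw [mul_add]; omega
    rw [e3] at this
    have : (f (N * (k + l) - s) : ℝ) ≤ f (N * k - s) + f (N * l - s) + C := by exact_mod_cast this
    linarith
  have hnn : ∀ k, 0 ≤ h k := by
    intro k; simp only [h]; split_ifs <;> positivity
  have hbd : BddBelow (Set.range fun n => h n / n) := by
    refine ⟨0, ?_⟩
    rintro _ ⟨k, rfl⟩
    exact div_nonneg (hnn k) (by positivity)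
  have hlim := hsa.tendsto_lim hbd
  set ℓ := hsa.lim
  set K : ℝ := 2 * N * D + 2 * C with hKdef
  have hup : ∀ n, 2 * N ≤ n → (f n : ℝ) ≤ h (n / N - 1) + K := by
    intro n hn
    have hNpos : 0 < N := by omega
    have hk : 2 ≤ n / N := (Nat.le_div_iff_mul_le hNpos).2 (by omega)
    obtain ⟨k, hk'⟩ : ∃ k, n / N = k + 2 := ⟨n / N - 2, by omega⟩
    have hdm := Nat.div_add_mod n N
    have hml := Nat.mod_lt n hNpos
    rw [hk'] at hdm ⊢
    have e0 : N * (k + 2) = N * (k + 1) + N := by ring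
    have e1 := hNk (k + 1) (by omega)
    have e2 := hsub (N * (k + 1) - s) (n - N * (k + 1)) (by omega) (by omega)
    have e3 : N * (k + 1) - s + (n - N * (k + 1)) + s = n := by omega
    rw [e3] at e2
    have e4 : f (n - N * (k + 1)) ≤ D * (2 * N) :=
      (hlin _).trans (Nat.mul_le_mul_left D (by omega))
    have e5 : (f n : ℝ) ≤ f (N * (k + 1) - s) + f (n - N * (k + 1)) + C := by exact_mod_cast e2
    have e6 : (f (n - N * (k + 1)) : ℝ) ≤ D * (2 * N) := by exact_mod_cast e4
    have e7 : k + 2 - 1 = k + 1 := by omega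
    rw [e7, hpos (k + 1) (by omega)]
    have : (0 : ℝ) ≤ C := by positivity
    rw [hKdef]; linarith
  have hlo : ∀ n, 2 * N ≤ n → h (n / N + 2) - K ≤ (f n : ℝ) := by
    intro n hn
    have hNpos : 0 < N := by omega
    set k := n / N with hk
    have hdm := Nat.div_add_mod n N
    have hml := Nat.mod_lt n hNpos
    rw [← hk] at hdm
    have e0 : N * (k + 2) = N * k + 2 * N := by ring
    have e2 := hsub n (N * (k + 2) - 2 * s - n) (by omega) (by omega)
    have e3 : n + (N * (k + 2) - 2 * s - n) + s = N * (k + 2) - s := by omega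
    rw [e3] at e2
    have e4 : f (N * (k + 2) - 2 * s - n) ≤ D * (2 * N) :=
      (hlin _).trans (Nat.mul_le_mul_left D (by omega))
    have e5 : (f (N * (k + 2) - s) : ℝ) ≤ f n + f (N * (k + 2) - 2 * s - n) + C := by
      exact_mod_cast e2
    have e6 : (f (N * (k + 2) - 2 * s - n) : ℝ) ≤ D * (2 * N) := by exact_mod_cast e4
    rw [hpos (k + 2) (Nat.succ_le_succ (Nat.zero_le _)), hKdef]
    linarith
  have hNpos : 0 < N := by omega
  have hNR : (0 : ℝ) < N := by exact_mod_cast hNpos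
  have hdivtop : Filter.Tendsto (fun n : ℕ => n / N) Filter.atTop Filter.atTop :=
    Nat.tendsto_div_const_atTop hNpos.ne'
  have hinv : Filter.Tendsto (fun n : ℕ => ((n : ℝ))⁻¹) Filter.atTop (nhds 0) :=
    tendsto_inv_atTop_nhds_zero_nat
  have hconst : ∀ q : ℝ, Filter.Tendsto (fun n : ℕ => q / n) Filter.atTop (nhds 0) := by
    intro q; exact tendsto_const_div_atTop_nhds_zero_nat q
  have hfrac : Filter.Tendsto (fun n : ℕ => ((n / N : ℕ) : ℝ) / n) Filter.atTop
      (nhds (1 / N)) := by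
    have h1 : Filter.Tendsto (fun n : ℕ => (1 / N : ℝ) - 1 / n) Filter.atTop
        (nhds (1 / N - 0)) := tendsto_const_nhds.sub (hconst 1)
    rw [sub_zero] at h1
    refine tendsto_of_tendsto_of_tendsto_of_le_of_le' h1 tendsto_const_nhds ?_ ?_
    · filter_upwards [Filter.eventually_gt_atTop 0] with n hn
      have hnR : (0 : ℝ) < n := by exact_mod_cast hn
      have : (n : ℝ) ≤ N * (n / N : ℕ) + N := by
        have := Nat.div_add_mod n N
        have h2 := Nat.mod_lt n hNpos
        have h3 : n ≤ N * (n / N) + N := by omega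
        exact_mod_cast h3
      rw [div_sub_div _ _ hNR.ne' hnR.ne', div_le_div_iff₀ (by positivity) hnR]
      nlinarith
    · filter_upwards [Filter.eventually_gt_atTop 0] with n hn
      have hnR : (0 : ℝ) < n := by exact_mod_cast hn
      have : (N : ℝ) * (n / N : ℕ) ≤ n := by exact_mod_cast Nat.mul_div_le n N
      rw [div_le_div_iff₀ hnR hNR]
      nlinarith
  have gen : ∀ g : ℕ → ℕ, Filter.Tendsto g Filter.atTop Filter.atTop →
      Filter.Tendsto (fun n : ℕ => (g n : ℝ) / n) Filter.atTop (nhds (1 / N)) →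
      Filter.Tendsto (fun n : ℕ => h (g n) / n) Filter.atTop (nhds (ℓ * (1 / N))) := by
    intro g hg hg2
    have := (hlim.comp hg).mul hg2
    refine this.congr' ?_
    filter_upwards [hg.eventually_gt_atTop 0] with n hn
    have : (g n : ℝ) ≠ 0 := by exact_mod_cast hn.ne'
    simp only [Function.comp]
    field_simp
  have gU := gen (fun n => n / N - 1) ((Filter.tendsto_sub_atTop_nat 1).comp hdivtop) (by
    have := hfrac.sub (hconst 1)
    rw [sub_zero] at this
    refine this.congr' ?_
    filter_upwards [hdivtop.eventually_ge_atTop 1] with n hn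
    rw [Nat.cast_sub hn]; push_cast; ring)
  have gL := gen (fun n => n / N + 2) (Filter.tendsto_atTop_mono (fun n => Nat.le_add_right _ 2) hdivtop) (by
    have := hfrac.add (hconst 2)
    rw [add_zero] at this
    refine this.congr' ?_
    filter_upwards with n
    push_cast; ring)
  refine ⟨ℓ * (1 / N), ?_⟩
  have gU' := gU.add (hconst K)
  have gL' := gL.sub (hconst K)
  rw [add_zero] at gU'
  rw [sub_zero] at gL'
  refine tendsto_of_tendsto_of_tendsto_of_le_of_le' gL' gU' ?_ ?_
  · filter_upwards [Filter.eventually_ge_atTop (2 * N)] with n hn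
    rw [← sub_div]
    exact div_le_div_of_nonneg_right (hlo n hn) (by positivity)
  · filter_upwards [Filter.eventually_ge_atTop (2 * N)] with n hn
    rw [← add_div]
    exact div_le_div_of_nonneg_right (hup n hn) (by positivity)

/-- For any non-empty graph `H`, the limit of `rwsat(n, H) / n` exists. -/
theorem rwsat_limit_exists {W : Type*} [Fintype W] (H : SimpleGraph W)
    (hH : H.edgeSet.Nonempty) :
    ∃ L : ℝ, Filter.Tendsto (fun n : ℕ => (rwsat H n : ℝ) / n)
      Filter.atTop (nhds L) := by
  obtain ⟨n0, s, C, h⟩ := rwsat_subadd H hH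
  exact fekete_like (rwsat H) _ n0 s C (rwsat_linear H hH) h
end

section
/- Let H be a non-empty graph and let t be an integer with t ≥ max(|V(H)|, 3) such that rwsat(n, H) ≤ t·n for every positive integer n. Then for all integers m_1, m_2 ≥ t^{10}, one has rwsat(m_1 + m_2, H) ≤ rwsat(m_1, H) + rwsat(m_2, H) + t^{14}. -/
open SimpleGraph

namespace RW

/-- `e` can be added to `E`. -/
def Addable {W V : Type*} (H : SimpleGraph W) (G : SimpleGraph V) (c : Sym2 V → ℕ)
    (E : Set (Sym2 V)) (e : Sym2 V) : Prop :=
  ∀ κ : Sym2 V → ℕ, (∀ p ∈ G.edgeSet, κ p = c p) →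
    Set.InjOn κ ((insert e E) \ G.edgeSet) →
    IsRainbowCopyThrough H (SimpleGraph.fromEdgeSet (insert e E)) κ e

/-- `E` contains `G` and is closed under adding edges. -/
def Closed {W V : Type*} (H : SimpleGraph W) (G : SimpleGraph V) (c : Sym2 V → ℕ)
    (E : Set (Sym2 V)) : Prop :=
  G.edgeSet ⊆ E ∧ ∀ e, ¬ e.IsDiag → Addable H G c E e → e ∈ E

/-- order-free weak saturation -/
def Sat {W V : Type*} (H : SimpleGraph W) (G : SimpleGraph V) (c : Sym2 V → ℕ) : Prop :=
  ∀ E, Closed H G c E → ∀ e : Sym2 V, ¬ e.IsDiag → e ∈ E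

lemma copy_mono {W V : Type*} {H : SimpleGraph W} {G G' : SimpleGraph V}
    {κ κ' : Sym2 V → ℕ} {e : Sym2 V} (h : IsRainbowCopyThrough H G κ e)
    (hG : G ≤ G') (hk : ∀ p ∈ G.edgeSet, κ p = κ' p) :
    IsRainbowCopyThrough H G' κ' e := by
  obtain ⟨f, hf, h1, h2, h3⟩ := h
  refine ⟨f, hf, fun a b hab => hG (h1 hab), ?_, h3⟩
  intro a b a' b' hab hab' heq
  apply h2 hab hab'
  rw [hk _ (h1 hab), hk _ (h1 hab'), heq]

lemma foldl_upd {V : Type*} [DecidableEq V] (g : Sym2 V → ℕ) (l : List (Sym2 V)) :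
    ∀ (c : Sym2 V → ℕ) (q : Sym2 V),
    ((l.map (fun p => (p, g p))).foldl (fun c' p => Function.update c' p.1 p.2) c) q
      = if q ∈ l then g q else c q := by
  induction l with
  | nil => simp
  | cons a l ih =>
    intro c q
    simp only [List.map_cons, List.foldl_cons, ih, List.mem_cons]
    by_cases h1 : q ∈ l
    · simp [h1]
    · by_cases h2 : q = a
      · subst h2; simp
      · simp [h1, h2]

lemma zip_take {V : Type*} (g : Sym2 V → ℕ) (L : List (Sym2 V)) (n : ℕ) :
    (L.zip (L.map g)).take n = (L.take n).map (fun p => (p, g p)) := by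
  have : L.zip (L.map g) = L.map (fun p => (p, g p)) := by
    induction L with
    | nil => rfl
    | cons a l ih => simp [ih]
  rw [this, List.map_take]

lemma not_mem_compl {V : Type*} {G : SimpleGraph V} {e : Sym2 V} (h : e ∈ Gᶜ.edgeSet) :
    e ∉ G.edgeSet ∧ ¬ e.IsDiag := by
  refine ⟨?_, SimpleGraph.not_isDiag_of_mem_edgeSet _ h⟩
  induction e with
  | h x y =>
    simp at h ⊢
    exact h.2

lemma mem_compl {V : Type*} {G : SimpleGraph V} {e : Sym2 V} (h : e ∉ G.edgeSet)
    (h' : ¬ e.IsDiag) : e ∈ Gᶜ.edgeSet := by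
  induction e with
  | h x y =>
    simp at h h' ⊢
    exact ⟨h', h⟩

lemma sat_of_weak {W V : Type*} [DecidableEq V] {H : SimpleGraph W} {G : SimpleGraph V}
    {c : Sym2 V → ℕ} (h : WeaklyRainbowSat H G c) : Sat H G c := by
  obtain ⟨L, hnd, hL, hs⟩ := h
  intro E hE
  have key : ∀ i (hi : i < L.length), L[i] ∈ E := by
    intro i
    induction i using Nat.strong_induction_on with
    | _ i ih =>
      intro hi
      have htake : ∀ p ∈ L.take (i+1), p ∈ insert L[i] E := by
        intro p hp
        rw [List.mem_take_iff_getElem] at hp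
        obtain ⟨j, hj, rfl⟩ := hp
        rcases Nat.lt_succ_iff_lt_or_eq.1 (lt_of_lt_of_le hj (min_le_left _ _)) with h | h
        · exact Set.mem_insert_of_mem _ (ih j h _)
        · subst h; exact Set.mem_insert _ _
      apply hE.2 _ (not_mem_compl ((hL _).1 (List.getElem_mem hi))).2
      intro κ hκ hinj
      let N := ((L.take (i+1)).map κ).sum + 1
      let g : Sym2 V → ℕ := fun p => if p ∈ L.take (i+1) then κ p else N + L.idxOf p
      have hN : ∀ p ∈ L.take (i+1), κ p < N := by
        intro p hp
        have := List.le_sum_of_mem (List.mem_map_of_mem (f := κ) hp)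
        omega
      have hginj : ∀ p ∈ L, ∀ q ∈ L, g p = g q → p = q := by
        intro p hp q hq hpq
        simp only [g] at hpq
        split_ifs at hpq with h1 h2 h2
        · exact hinj ⟨htake _ h1, (not_mem_compl ((hL _).1 hp)).1⟩
            ⟨htake _ h2, (not_mem_compl ((hL _).1 hq)).1⟩ hpq
        · have := hN _ h1; omega
        · have := hN _ h2; omega
        · exact (List.idxOf_inj hp).1 (by omega)
      have hcs : (L.map g).Nodup := List.Nodup.map_on hginj hnd
      have := hs (L.map g) (by simp) hcs ⟨i, hi⟩
      simp only [zip_take] at this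
      refine copy_mono this ?_ ?_
      · refine sup_le ?_ ?_
        · intro x y hxy
          rw [SimpleGraph.fromEdgeSet_adj]
          exact ⟨Set.mem_insert_of_mem _ (hE.1 hxy), hxy.ne⟩
        · apply SimpleGraph.fromEdgeSet_mono
          exact htake
      · intro p hp
        rw [foldl_upd]
        split_ifs with h1
        · simp [g, h1]
        · rw [SimpleGraph.edgeSet_sup, SimpleGraph.edgeSet_fromEdgeSet] at hp
          rcases hp with hp | hp
          · exact (hκ p hp).symm
          · exact absurd hp.1 h1
  intro e he
  by_cases h : e ∈ G.edgeSet
  · exact hE.1 h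
  · have : e ∈ L := (hL e).2 (mem_compl h he)
    obtain ⟨i, hi, rfl⟩ := List.getElem_of_mem this
    exact key i hi

/-- partial saturating list -/
def Ok {W V : Type*} (H : SimpleGraph W) (G : SimpleGraph V) (c : Sym2 V → ℕ)
    (L : List (Sym2 V)) : Prop :=
  L.Nodup ∧ (∀ e ∈ L, e ∈ Gᶜ.edgeSet) ∧
    ∀ i (hi : i < L.length), Addable H G c (G.edgeSet ∪ {e | e ∈ L.take i}) L[i]

lemma weak_of_sat {W V : Type*} [DecidableEq V] [Fintype V] {H : SimpleGraph W}
    {G : SimpleGraph V} {c : Sym2 V → ℕ} (h : Sat H G c) : WeaklyRainbowSat H G c := by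
  classical
  have hex : ∃ L, Ok H G c L ∧ ∀ L', Ok H G c L' → L'.length ≤ L.length := by
    let P : ℕ → Prop := fun n => ∃ L, Ok H G c L ∧ L.length = n
    have hb : ∀ L, Ok H G c L → L.length ≤ Fintype.card (Sym2 V) := by
      intro L hL
      rw [← List.toFinset_card_of_nodup hL.1]
      exact Finset.card_le_univ _
    have h0 : P 0 := ⟨[], ⟨by simp, by simp, by simp⟩, rfl⟩
    obtain ⟨L, hL, hlen⟩ := Nat.findGreatest_spec (P := P) (Nat.zero_le (Fintype.card (Sym2 V))) h0
    refine ⟨L, hL, fun L' hL' => ?_⟩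
    rw [hlen]
    exact Nat.le_findGreatest (hb L' hL') ⟨L', hL', rfl⟩
  obtain ⟨L, ⟨hnd, hsub, hadd⟩, hmax⟩ := hex
  have hcl : Closed H G c (G.edgeSet ∪ {e | e ∈ L}) := by
    refine ⟨Set.subset_union_left, fun e he ha => ?_⟩
    by_contra hne
    have hne1 : e ∉ G.edgeSet := fun h => hne (Or.inl h)
    have hne2 : e ∉ L := fun h => hne (Or.inr h)
    have : Ok H G c (L ++ [e]) := by
      refine ⟨?_, ?_, ?_⟩
      · rw [List.nodup_append]
        refine ⟨hnd, by simp, ?_⟩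
        intro a ha' b hb hab
        simp at hb
        rw [hab, hb] at ha'
        exact hne2 ha'
      · intro p hp
        simp at hp
        rcases hp with hp | rfl
        · exact hsub p hp
        · exact mem_compl hne1 he
      · intro i hi
        simp at hi
        rcases lt_or_eq_of_le hi with h | h
        · have := hadd i h
          rw [List.getElem_append_left h, List.take_append_of_le_length h.le]
          exact this
        · subst h
          simpa using ha
    have := hmax _ this
    simp at this
  refine ⟨L, hnd, fun e => ⟨hsub e, fun he => ?_⟩, ?_⟩
  · have h1 := not_mem_compl he
    exact (h _ hcl e h1.2).resolve_left h1.1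
  · intro cs hlen hcs i
    obtain ⟨i, hi⟩ := i
    let g : Sym2 V → ℕ := fun p => cs.getD (L.idxOf p) 0
    have hg : L.map g = cs := by
      apply List.ext_getElem
      · simp [hlen]
      · intro j h1 h2
        simp only [List.getElem_map, g]
        simp at h1
        rw [hnd.idxOf_getElem _ h1]
        simp [h2]
    have hginj : ∀ p ∈ L, ∀ q ∈ L, g p = g q → p = q := by
      intro p hp q hq hpq
      rw [← hg] at hcs
      exact List.inj_on_of_nodup_map hcs hp hq hpq
    rw [← hg, zip_take]
    set κ := (((L.take (i+1)).map (fun p => (p, g p))).foldl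
            (fun c' p => Function.update c' p.1 p.2) c) with hκ
    have hk : ∀ q, κ q = if q ∈ L.take (i+1) then g q else c q := by
      intro q; rw [hκ, foldl_upd]
    have htk : ∀ p ∈ insert L[i] (G.edgeSet ∪ {e | e ∈ L.take i}), p ∈ G.edgeSet ∨ p ∈ L.take (i+1) := by
      intro p hp
      rw [List.take_succ_eq_append_getElem hi]
      rcases hp with rfl | hp | hp
      · right; exact List.mem_append_right _ (List.mem_singleton.2 rfl)
      · exact Or.inl hp
      · right; exact List.mem_append_left _ hp
    refine copy_mono (hadd i hi κ ?_ ?_) ?_ (fun _ _ => rfl)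
    · intro p hp
      rw [hk, if_neg]
      intro hp'
      exact (not_mem_compl (hsub p (List.mem_of_mem_take hp'))).1 hp
    · intro p hp q hq hpq
      have hp1 := (htk p hp.1).resolve_left hp.2
      have hq1 := (htk q hq.1).resolve_left hq.2
      rw [hk, hk, if_pos hp1, if_pos hq1] at hpq
      exact hginj p (List.mem_of_mem_take hp1) q (List.mem_of_mem_take hq1) hpq
    · intro x y hxy
      rw [SimpleGraph.fromEdgeSet_adj] at hxy
      rcases htk _ hxy.1 with h1 | h1
      · exact Or.inl h1
      · right
        rw [SimpleGraph.fromEdgeSet_adj]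
        exact ⟨h1, hxy.2⟩

lemma transfer {W V V' : Type*} {H : SimpleGraph W} {G : SimpleGraph V} {c : Sym2 V → ℕ}
    {G' : SimpleGraph V'} {c' : Sym2 V' → ℕ} (hs : Sat H G c) (φ : V → V')
    (hφ : Function.Injective φ) (hadj : ∀ x y, G'.Adj (φ x) (φ y) ↔ G.Adj x y)
    (hc : ∀ x y, G.Adj x y → c' s(φ x, φ y) = c s(x, y))
    {E : Set (Sym2 V')} (hE : Closed H G' c' E) (x y : V) (hxy : x ≠ y) :
    s(φ x, φ y) ∈ E := by
  have hedge : ∀ p : Sym2 V, p.map φ ∈ G'.edgeSet ↔ p ∈ G.edgeSet := by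
    intro p
    induction p with
    | h a b => simpa using hadj a b
  have hminj : Function.Injective (Sym2.map φ) := Sym2.map.injective hφ
  have hcl : Closed H G c {p | p.map φ ∈ E} := by
    refine ⟨fun p hp => hE.1 ((hedge p).2 hp), fun e he ha => ?_⟩
    have hnd : ¬ (e.map φ).IsDiag := by
      induction e with
      | h a b => simp at he ⊢; exact fun h => he (hφ h)
    apply hE.2 _ hnd
    intro κ hκ hinj
    obtain ⟨f, hf, h1, h2, a, b, hab, h3⟩ := ha (fun p => κ (p.map φ)) (by
      intro p hp
      show κ (p.map φ) = c p
      rw [hκ _ ((hedge p).2 hp)]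
      induction p with
      | h a b => exact hc a b hp) (by
      intro p hp q hq hpq
      have aux : ∀ p ∈ insert e {p : Sym2 V | p.map φ ∈ E} \ G.edgeSet,
          p.map φ ∈ insert (e.map φ) E \ G'.edgeSet := by
        intro p hp
        refine ⟨?_, fun h => hp.2 ((hedge p).1 h)⟩
        rcases hp.1 with rfl | h
        · exact Set.mem_insert _ _
        · exact Set.mem_insert_of_mem _ h
      exact hminj (hinj (aux p hp) (aux q hq) hpq))
    refine ⟨φ ∘ f, hφ.comp hf, ?_, ?_, a, b, hab, ?_⟩
    · intro a b hab
      have := h1 hab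
      rw [SimpleGraph.fromEdgeSet_adj] at this ⊢
      refine ⟨?_, fun h => this.2 (hφ h)⟩
      rcases this.1 with h | h
      · left; rw [← h]; rfl
      · right; exact h
    · intro a b a' b' hab hab' heq
      exact h2 hab hab' heq
    · rw [h3]; rfl
  exact hs _ hcl s(x, y) (by simpa using hxy)

lemma rwsat_le {W V : Type*} [Fintype V] {H : SimpleGraph W} {G : SimpleGraph V}
    {c : Sym2 V → ℕ} (hs : Sat H G c) (n : ℕ) (hn : Fintype.card V = n) :
    rwsat H n ≤ G.edgeSet.ncard := by
  classical
  let e : V ≃ Fin n := Fintype.equivFinOfCardEq hn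
  let G' : SimpleGraph (Fin n) := G.comap e.symm
  let c' : Sym2 (Fin n) → ℕ := fun p => c (p.map e.symm)
  have hs' : Sat H G' c' := by
    intro E hE p hp
    induction p with
    | h x y =>
      have := transfer (G' := G') (c' := c') hs e e.injective (by simp [G']) (by simp [c']) hE
        (e.symm x) (e.symm y) (by simpa using hp)
      simpa using this
  apply Nat.sInf_le
  left
  refine ⟨G', c', weak_of_sat hs', ?_⟩
  have : G.edgeSet = Sym2.map e.symm '' G'.edgeSet := by
    ext p
    constructor
    · intro hp
      refine ⟨p.map e, ?_, ?_⟩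
      · induction p with
        | h x y => simpa [G'] using hp
      · rw [Sym2.map_map]; simp
    · rintro ⟨q, hq, rfl⟩
      induction q with
      | h x y => simpa [G'] using hq
  rw [this, Set.ncard_image_of_injective _ (Sym2.map.injective e.symm.injective)]

lemma exists_sat {W : Type*} (H : SimpleGraph W) (n : ℕ) :
    ∃ (G : SimpleGraph (Fin n)) (c : Sym2 (Fin n) → ℕ), Sat H G c ∧
      G.edgeSet.ncard = rwsat H n := by
  classical
  have hne : ({m | ∃ (G : SimpleGraph (Fin n)) (c : Sym2 (Fin n) → ℕ),
    WeaklyRainbowSat H G c ∧ G.edgeSet.ncard = m} ∪ {n.choose 2}).Nonempty := ⟨_, Or.inr rfl⟩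
  rcases Nat.sInf_mem hne with ⟨G, c, h, hm⟩ | h
  · exact ⟨G, c, sat_of_weak h, hm⟩
  · refine ⟨⊤, fun _ => 0, ?_, ?_⟩
    · intro E hE e he
      apply hE.1
      induction e with
      | h x y => simpa using he
    · have h' : rwsat H n = n.choose 2 := h
      rw [h', Set.ncard_eq_toFinset_card']
      have := SimpleGraph.card_edgeFinset_top_eq_card_choose_two (V := Fin n)
      rw [Fintype.card_fin] at this
      rw [← this]
      congr

lemma greedy {V : Type*} [Fintype V] [DecidableEq V] (G : SimpleGraph V) [DecidableRel G.Adj]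
    (D : ℕ) (U : Finset V) (hU : ∀ v, v ∉ U → G.degree v ≤ D) (k : ℕ) :
    ∀ X : Finset V, U ⊆ X → X.card + k * (D + 1) ≤ Fintype.card V →
    ∃ S : Finset V, S.card = k ∧ Disjoint S X ∧ ∀ a ∈ S, ∀ b ∈ S, ¬ G.Adj a b := by
  induction k with
  | zero => intro X _ _; exact ⟨∅, by simp⟩
  | succ k ih =>
    intro X hX hc
    have hlt : X.card < Fintype.card V := by nlinarith
    obtain ⟨v, hv⟩ : ∃ v, v ∉ X := by
      by_contra hcon
      push Not at hcon
      have : X = Finset.univ := Finset.eq_univ_of_forall hcon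
      rw [this, Finset.card_univ] at hlt
      exact lt_irrefl _ hlt
    have hd := hU v (fun h => hv (hX h))
    have hcard : (X ∪ insert v (G.neighborFinset v)).card ≤ X.card + (D + 1) := by
      refine (Finset.card_union_le _ _).trans ?_
      have := Finset.card_insert_le v (G.neighborFinset v)
      rw [SimpleGraph.card_neighborFinset_eq_degree] at this
      omega
    obtain ⟨S, hS, hdis, hind⟩ := ih (X ∪ insert v (G.neighborFinset v))
      (hX.trans Finset.subset_union_left) (by nlinarith)
    rw [Finset.disjoint_left] at hdis
    have hvS : v ∉ S := fun h => hdis h (by simp)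
    have hadj : ∀ s ∈ S, ¬ G.Adj v s := fun s hs h => hdis hs (by simp [h])
    refine ⟨insert v S, by rw [Finset.card_insert_of_notMem hvS, hS], ?_, ?_⟩
    · rw [Finset.disjoint_left]
      intro a ha hax
      rcases Finset.mem_insert.1 ha with rfl | ha
      · exact hv hax
      · exact hdis ha (Finset.mem_union_left _ hax)
    · intro a ha b hb hab
      rcases Finset.mem_insert.1 ha with h1 | ha1 <;> rcases Finset.mem_insert.1 hb with h2 | hb1
      · rw [h1, h2] at hab; exact G.loopless.irrefl _ hab
      · rw [h1] at hab; exact hadj _ hb1 hab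
      · rw [h2] at hab; exact hadj _ ha1 hab.symm
      · exact hind a ha1 b hb1 hab

/-- The parts used by the construction. -/
structure Parts {V : Type*} (G : SimpleGraph V) (t : ℕ) (U B R : Finset V) (cl : V → ℕ) : Prop where
  dUB : ∀ v ∈ U, v ∉ B
  small : U.card + B.card ≤ t ^ 7
  indB : ∀ a ∈ B, ∀ b ∈ B, ¬ G.Adj a b
  cls : ∀ i < t, 2 * t + 1 ≤ (B.filter (fun s => cl s = i)).card
  bigB : t ≤ B.card
  RU : ∀ v ∈ R, v ∉ U
  RB : ∀ v ∈ R, v ∉ B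
  RadjB : ∀ v ∈ R, ∀ b ∈ B, ¬ G.Adj v b
  ext : ∀ v, v ∉ U → ∃ S ⊆ R, S.card = t ∧ v ∉ S ∧ (∀ a ∈ S, ∀ b ∈ S, ¬ G.Adj a b) ∧
    ∀ s ∈ S, ¬ G.Adj v s

lemma exists_cl {V : Type*} [DecidableEq V] (B : Finset V) (t k : ℕ) (h : B.card = t * k) :
    ∃ cl : V → ℕ, ∀ i < t, k ≤ (B.filter (fun s => cl s = i)).card := by
  let e := B.equivFinOfCardEq h
  refine ⟨fun v => if hv : v ∈ B then (e ⟨v, hv⟩ : ℕ) / k else 0, fun i hi => ?_⟩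
  have hlt : ∀ j : Fin k, i * k + j < t * k := by
    intro j
    have := j.2
    nlinarith
  let φ : Fin k → V := fun j => (e.symm ⟨i * k + j, hlt j⟩ : B)
  have hφ : Function.Injective φ := by
    intro a b hab
    have := e.symm.injective (Subtype.ext hab)
    simp at this
    exact Fin.ext this
  have := Finset.card_le_card (s := Finset.univ.map ⟨φ, hφ⟩)
    (t := B.filter (fun s => (if hv : s ∈ B then (e ⟨s, hv⟩ : ℕ) / k else 0) = i)) (by
      intro v hv
      simp only [Finset.mem_map, Finset.mem_univ, true_and, Function.Embedding.coeFn_mk] at hv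
      obtain ⟨j, rfl⟩ := hv
      have hm : φ j ∈ B := (e.symm ⟨i * k + j, hlt j⟩).2
      rw [Finset.mem_filter]
      refine ⟨hm, ?_⟩
      rw [dif_pos hm]
      have : e ⟨φ j, hm⟩ = ⟨i * k + j, hlt j⟩ := by simp [φ]
      rw [this]
      show (i * k + j) / k = i
      have hk : 0 < k := lt_of_le_of_lt (Nat.zero_le _) j.2
      rw [mul_comm, Nat.mul_add_div hk, Nat.div_eq_of_lt j.2, add_zero])
  simpa using this

lemma exists_parts {V : Type*} [Fintype V] (G : SimpleGraph V) (t : ℕ) (ht : 3 ≤ t)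
    (hm : t ^ 10 ≤ Fintype.card V) (he : G.edgeSet.ncard ≤ t * Fintype.card V) :
    ∃ U B R cl, Parts G t U B R cl := by
  classical
  set m := Fintype.card V with hmdef
  set D := m / t ^ 4 with hD
  have ht4 : 0 < t ^ 4 := by positivity
  have hD1 : m < (D + 1) * t ^ 4 := by
    have := Nat.lt_div_mul_add (a := m) ht4
    rw [← hD] at this; linarith
  have hD2 : D * t ^ 4 ≤ m := Nat.div_mul_le_self _ _
  set U : Finset V := Finset.univ.filter (fun v => D < G.degree v) with hU
  have hUdeg : ∀ v, v ∉ U → G.degree v ≤ D := by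
    intro v hv
    simpa [hU] using hv
  have hUc : U.card ≤ 2 * t ^ 5 := by
    have h1 : U.card * (D + 1) ≤ ∑ v, G.degree v := by
      calc U.card * (D + 1) = ∑ v ∈ U, (D + 1) := by simp
        _ ≤ ∑ v ∈ U, G.degree v := Finset.sum_le_sum (fun v hv => by
            have : D < G.degree v := by simpa [hU] using hv
            omega)
        _ ≤ _ := Finset.sum_le_sum_of_subset (Finset.subset_univ _)
    rw [SimpleGraph.sum_degrees_eq_twice_card_edges] at h1
    have h2 : G.edgeFinset.card = G.edgeSet.ncard := by
      rw [Set.ncard_eq_toFinset_card']; rfl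
    rw [h2] at h1
    by_contra hcon
    push Not at hcon
    have h3 : (2 * t ^ 5 + 1) * (D + 1) ≤ 2 * (t * m) := by nlinarith
    have h4 : t * m ≤ t * ((D + 1) * t ^ 4) := Nat.mul_le_mul_left _ hD1.le
    have h5 : 2 * (t * ((D + 1) * t ^ 4)) = 2 * t ^ 5 * (D + 1) := by ring
    nlinarith
  have hnum : 2 * t ^ 5 + (t * (2 * t + 1) + t + 1) * (D + 1) ≤ m := by
    have h1 : t * (2 * t + 1) + t + 1 ≤ 3 * t ^ 2 := by nlinarith
    have h2 : t ^ 2 * (3 * t ^ 2 * (D + 1)) ≤ 3 * (m + t ^ 4) := by nlinarith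
    have h3 : 9 ≤ t ^ 2 := by nlinarith
    have h4 : 9 * (3 * t ^ 2 * (D + 1)) ≤ 3 * (m + t ^ 4) :=
      le_trans (Nat.mul_le_mul_right _ h3) h2
    have h5 : 9 * t ^ 5 ≤ m := by
      have : t ^ 10 = t ^ 3 * t ^ 2 * t ^ 5 := by ring
      have h6 : 9 ≤ t ^ 3 * t ^ 2 := by
        have : 1 ≤ t ^ 3 := Nat.one_le_pow _ _ (by omega)
        nlinarith
      calc 9 * t ^ 5 ≤ t ^ 3 * t ^ 2 * t ^ 5 := Nat.mul_le_mul_right _ h6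
        _ ≤ m := by rw [← this]; exact hm
    have h6 : t ^ 4 ≤ t ^ 5 := Nat.pow_le_pow_right (by omega) (by omega)
    have h7 : (t * (2 * t + 1) + t + 1) * (D + 1) ≤ 3 * t ^ 2 * (D + 1) :=
      Nat.mul_le_mul_right _ h1
    omega
  obtain ⟨B, hBc, hBU, hBind⟩ := greedy G D U hUdeg (t * (2 * t + 1)) U subset_rfl (by nlinarith)
  obtain ⟨cl, hcl⟩ := exists_cl B t (2 * t + 1) hBc
  rw [Finset.disjoint_left] at hBU
  set Z := U ∪ B.biUnion (fun b => insert b (G.neighborFinset b)) with hZ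
  have hins : ∀ v, v ∉ U → (insert v (G.neighborFinset v)).card ≤ D + 1 := by
    intro v hv
    have := Finset.card_insert_le v (G.neighborFinset v)
    rw [SimpleGraph.card_neighborFinset_eq_degree] at this
    have := hUdeg v hv
    omega
  have hZc : Z.card ≤ 2 * t ^ 5 + (t * (2 * t + 1)) * (D + 1) := by
    refine (Finset.card_union_le _ _).trans (add_le_add hUc ?_)
    rw [← hBc]
    exact Finset.card_biUnion_le_card_mul _ _ _ (fun b hb => hins b (hBU hb))
  refine ⟨U, B, Zᶜ, cl, ⟨fun v hv hb => hBU hb hv, ?_, hBind, hcl, ?_, ?_, ?_, ?_, ?_⟩⟩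
  · rw [hBc]
    have h1 : t * (2 * t + 1) ≤ 3 * t ^ 5 := by
      have : t ^ 2 ≤ t ^ 5 := Nat.pow_le_pow_right (by omega) (by omega)
      nlinarith
    have h2 : t ^ 7 = t ^ 2 * t ^ 5 := by ring
    have h3 : 9 * t ^ 5 ≤ t ^ 2 * t ^ 5 := Nat.mul_le_mul_right _ (by nlinarith)
    omega
  · rw [hBc]; nlinarith
  · intro v hv h
    exact (Finset.mem_compl.1 hv) (Finset.mem_union_left _ h)
  · intro v hv h
    refine (Finset.mem_compl.1 hv) (Finset.mem_union_right _ ?_)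
    exact Finset.mem_biUnion.2 ⟨v, h, by simp⟩
  · intro v hv b hb h
    refine (Finset.mem_compl.1 hv) (Finset.mem_union_right _ ?_)
    exact Finset.mem_biUnion.2 ⟨b, hb, by simp [h.symm]⟩
  · intro v hv
    obtain ⟨S, hS, hdis, hind⟩ := greedy G D U hUdeg t (Z ∪ insert v (G.neighborFinset v))
      (fun x hx => Finset.mem_union_left _ (Finset.mem_union_left _ hx)) (by
        have h1 := Finset.card_union_le Z (insert v (G.neighborFinset v))
        have h2 := hins v hv
        nlinarith)
    rw [Finset.disjoint_left] at hdis
    refine ⟨S, ?_, hS, ?_, hind, ?_⟩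
    · intro s hs
      rw [Finset.mem_compl]
      exact fun h => hdis hs (Finset.mem_union_left _ h)
    · exact fun h => hdis h (by simp)
    · exact fun s hs h => hdis hs (by simp [h])

/-- A filled pair which is not an edge of the base graph. -/
def Non {V : Type*} (G : SimpleGraph V) (E : Set (Sym2 V)) (p q : V) : Prop :=
  s(p, q) ∈ E ∧ ¬ G.Adj p q

lemma Non.symm {V : Type*} {G : SimpleGraph V} {E : Set (Sym2 V)} {p q : V} (h : Non G E p q) :
    Non G E q p := ⟨by rw [Sym2.eq_swap]; exact h.1, fun h' => h.2 h'.symm⟩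

lemma core {W V : Type*} [Fintype W] [DecidableEq V] {H : SimpleGraph W} {t : ℕ}
    (hW : Fintype.card W ≤ t) {a b : W} (hab : H.Adj a b) {u x : V} (hux : u ≠ x)
    {F : Set (Sym2 V)} {κ : Sym2 V → ℕ} (S : Finset V) (hu : u ∉ S) (hx : x ∉ S)
    (hS : t ≤ S.card + 2)
    (hF : ∀ p ∈ insert u (insert x S), ∀ q ∈ insert u (insert x S), p ≠ q → s(p, q) ∈ F)
    (hinj : ∀ p ∈ insert u (insert x S), ∀ q ∈ insert u (insert x S), p ≠ q →
      ∀ p' ∈ insert u (insert x S), ∀ q' ∈ insert u (insert x S), p' ≠ q' →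
      κ s(p, q) = κ s(p', q') → s(p, q) = s(p', q')) :
    IsRainbowCopyThrough H (SimpleGraph.fromEdgeSet F) κ s(u, x) := by
  classical
  have hcard : Fintype.card {w : W // w ∉ ({a, b} : Finset W)} ≤ S.card := by
    have h1 : Fintype.card {w : W // w ∉ ({a, b} : Finset W)} = Fintype.card W - 2 := by
      rw [Fintype.card_subtype_compl]
      simp only [Fintype.card_coe, Finset.card_pair hab.ne]
    omega
  obtain ⟨g, hg⟩ := Function.Embedding.exists_of_card_le_finset hcard
  have hgS : ∀ w, g w ∈ S := fun w => hg ⟨w, rfl⟩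
  let f : W → V := fun w => if w = a then u else if w = b then x else
    if h : w ∉ ({a, b} : Finset W) then g ⟨w, h⟩ else u
  have fa : f a = u := by simp [f]
  have fb : f b = x := by simp [f, hab.ne.symm]
  have fo : ∀ w (h : w ∉ ({a, b} : Finset W)), f w = g ⟨w, h⟩ := by
    intro w h
    have h' := h
    simp only [Finset.mem_insert, Finset.mem_singleton, not_or] at h'
    simp only [f]
    rw [if_neg h'.1, if_neg h'.2, dif_pos h]
  have cases : ∀ w, w = a ∨ w = b ∨ w ∉ ({a, b} : Finset W) := by
    intro w
    simp only [Finset.mem_insert, Finset.mem_singleton, not_or]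
    tauto
  have finj : Function.Injective f := by
    intro w w' h
    rcases cases w with rfl | rfl | hw <;> rcases cases w' with rfl | rfl | hw'
    · rfl
    · rw [fa, fb] at h; exact absurd h hux
    · rw [fa, fo _ hw'] at h; exact absurd (h ▸ hgS _) hu
    · rw [fa, fb] at h; exact absurd h.symm hux
    · rfl
    · rw [fb, fo _ hw'] at h; exact absurd (h ▸ hgS _) hx
    · rw [fa, fo _ hw] at h; exact absurd (h ▸ hgS _) hu
    · rw [fb, fo _ hw] at h; exact absurd (h ▸ hgS _) hx
    · rw [fo _ hw, fo _ hw'] at h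
      exact congrArg Subtype.val (g.injective h)
  have fT : ∀ w, f w ∈ insert u (insert x S) := by
    intro w
    rcases cases w with rfl | rfl | hw
    · rw [fa]; simp
    · rw [fb]; simp
    · rw [fo _ hw]
      exact Finset.mem_insert_of_mem (Finset.mem_insert_of_mem (hgS _))
  refine ⟨f, finj, ?_, ?_, a, b, hab, by rw [fa, fb]⟩
  · intro w w' h
    rw [SimpleGraph.fromEdgeSet_adj]
    have hne : f w ≠ f w' := fun h' => h.ne (finj h')
    exact ⟨hF _ (fT w) _ (fT w') hne, hne⟩
  · intro w w' z z' h h' heq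
    have := hinj _ (fT w) _ (fT w') (fun q => h.ne (finj q)) _ (fT z) _ (fT z')
      (fun q => h'.ne (finj q)) heq
    exact Sym2.map.injective finj this

lemma fill {W V : Type*} [Fintype W] [DecidableEq V] {H : SimpleGraph W} {t : ℕ}
    (hW : Fintype.card W ≤ t) {a b : W} (hab : H.Adj a b) {G : SimpleGraph V} {c : Sym2 V → ℕ}
    {E : Set (Sym2 V)} (hE : Closed H G c E) {u x : V} (hux : u ≠ x) (S : Finset V)
    (hu : u ∉ S) (hx : x ∉ S) (hS : t ≤ S.card)
    (h1 : ∀ s ∈ S, Non G E u s) (h2 : ∀ s ∈ S, Non G E x s)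
    (h3 : ∀ s ∈ S, ∀ s' ∈ S, s ≠ s' → Non G E s s') : s(u, x) ∈ E := by
  by_cases hadj : G.Adj u x
  · exact hE.1 hadj
  refine hE.2 _ (by simpa using hux) ?_
  intro κ hκ hinj
  have hF : ∀ p ∈ insert u (insert x S), ∀ q ∈ insert u (insert x S), p ≠ q →
      s(p, q) ∈ insert s(u, x) E \ G.edgeSet := by
    have aux : ∀ p q, Non G E p q → s(p, q) ∈ insert s(u, x) E \ G.edgeSet :=
      fun p q h => ⟨Set.mem_insert_of_mem _ h.1, h.2⟩
    intro p hp q hq hpq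
    simp only [Finset.mem_insert] at hp hq
    rcases hp with hp | hp | hp <;> rcases hq with hq | hq | hq
    · exact absurd (hp.trans hq.symm) hpq
    · rw [hp, hq]; exact ⟨Set.mem_insert _ _, hadj⟩
    · rw [hp]; exact aux _ _ (h1 _ hq)
    · rw [hp, hq, show s(x, u) = s(u, x) from Sym2.eq_swap]; exact ⟨Set.mem_insert _ _, hadj⟩
    · exact absurd (hp.trans hq.symm) hpq
    · rw [hp]; exact aux _ _ (h2 _ hq)
    · rw [hq]; exact aux _ _ (h1 _ hp).symm
    · rw [hq]; exact aux _ _ (h2 _ hp).symm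
    · exact aux _ _ (h3 _ hp _ hq hpq)
  refine core hW hab hux S hu hx (by omega) (fun p hp q hq h => (hF p hp q hq h).1) ?_
  intro p hp q hq h p' hp' q' hq' h' heq
  exact hinj (hF p hp q hq h) (hF p' hp' q' hq' h') heq

lemma attach {W V : Type*} [Fintype W] [DecidableEq V] {H : SimpleGraph W} {t : ℕ}
    (hW : Fintype.card W ≤ t) {a b : W} (hab : H.Adj a b) {G : SimpleGraph V} {c : Sym2 V → ℕ}
    {E : Set (Sym2 V)} (hE : Closed H G c E) {u x : V} (hux : u ≠ x) (B : Finset V)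
    (cl : V → ℕ) (hu : u ∉ B) (hx : x ∉ B)
    (hB : ∀ i < t, 2 * t + 1 ≤ (B.filter (fun s => cl s = i)).card)
    (h1 : ∀ s ∈ B, G.Adj u s ∧ c s(u, s) = cl s) (h2 : ∀ s ∈ B, Non G E x s)
    (h3 : ∀ s ∈ B, ∀ s' ∈ B, s ≠ s' → Non G E s s') : s(u, x) ∈ E := by
  by_cases hadj : G.Adj u x
  · exact hE.1 hadj
  refine hE.2 _ (by simpa using hux) ?_
  intro κ hκ hinj
  have hex : ∀ i : ℕ, ∃ e : Sym2 V, ∀ p ∈ insert s(u, x) E \ G.edgeSet, κ p = i → p = e := by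
    intro i
    by_cases h : ∃ p ∈ insert s(u, x) E \ G.edgeSet, κ p = i
    · obtain ⟨p, hp, hpi⟩ := h
      exact ⟨p, fun q hq hqi => hinj hq hp (hqi.trans hpi.symm)⟩
    · exact ⟨s(u, x), fun p hp hpi => absurd ⟨p, hp, hpi⟩ h⟩
  choose e he using hex
  let Bad : Finset V := (Finset.range t).biUnion (fun i => (e i).toFinset)
  have hBad : Bad.card ≤ 2 * t := by
    have := Finset.card_biUnion_le_card_mul (Finset.range t) (fun i => (e i).toFinset) 2
      (fun i _ => by
        rw [Sym2.card_toFinset]; split_ifs <;> omega)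
    rw [Finset.card_range] at this
    exact this.trans (by omega)
  have hs : ∀ i, ∃ s, i < t → s ∈ B ∧ cl s = i ∧ s ∉ Bad := by
    intro i
    by_cases hi : i < t
    · obtain ⟨s, hs, hs'⟩ := Finset.exists_mem_notMem_of_card_lt_card
        (lt_of_le_of_lt hBad (hB i hi))
      rw [Finset.mem_filter] at hs
      exact ⟨s, fun _ => ⟨hs.1, hs.2, hs'⟩⟩
    · exact ⟨u, fun h => absurd h hi⟩
  choose s hs using hs
  let I := (Finset.range t).erase (κ s(u, x))
  let S := I.image s
  have hI : ∀ i ∈ I, i < t ∧ i ≠ κ s(u, x) := by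
    intro i hi
    simp only [I, Finset.mem_erase, Finset.mem_range] at hi
    exact ⟨hi.2, hi.1⟩
  have hScard : t ≤ S.card + 2 := by
    have h4 : S.card = I.card := by
      apply Finset.card_image_of_injOn
      intro i hi j hj hij
      have := (hs i (hI i hi).1).2.1
      rw [hij, (hs j (hI j hj).1).2.1] at this
      exact this.symm
    have h5 := Finset.pred_card_le_card_erase (s := Finset.range t) (a := κ s(u, x))
    rw [Finset.card_range] at h5
    have h6 : I.card = ((Finset.range t).erase (κ s(u, x))).card := rfl
    omega
  have hSB : ∀ p ∈ S, p ∈ B ∧ p ∉ Bad ∧ cl p ∈ I ∧ p = s (cl p) := by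
    intro p hp
    obtain ⟨i, hi, rfl⟩ := Finset.mem_image.1 hp
    have := hs i (hI i hi).1
    refine ⟨this.1, this.2.2, ?_, ?_⟩
    · rw [this.2.1]; exact hi
    · rw [this.2.1]
  have cls : ∀ p ∈ insert u (insert x S), ∀ q ∈ insert u (insert x S), p ≠ q →
      (∃ r ∈ S, s(p, q) = s(u, r)) ∨ (s(p, q) ∈ insert s(u, x) E \ G.edgeSet ∧
        (s(p, q) = s(u, x) ∨ ∃ r ∈ S, r ∈ s(p, q))) := by
    have aux : ∀ p q, Non G E p q → s(p, q) ∈ insert s(u, x) E \ G.edgeSet :=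
      fun p q h => ⟨Set.mem_insert_of_mem _ h.1, h.2⟩
    intro p hp q hq hpq
    simp only [Finset.mem_insert] at hp hq
    rcases hp with hp | hp | hp <;> rcases hq with hq | hq | hq
    · exact absurd (hp.trans hq.symm) hpq
    · right; rw [hp, hq]; exact ⟨⟨Set.mem_insert _ _, hadj⟩, Or.inl rfl⟩
    · left; rw [hp]; exact ⟨q, hq, rfl⟩
    · right; rw [hp, hq, show s(x, u) = s(u, x) from Sym2.eq_swap]; exact ⟨⟨Set.mem_insert _ _, hadj⟩, Or.inl rfl⟩
    · exact absurd (hp.trans hq.symm) hpq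
    · right; rw [hp]; exact ⟨aux _ _ (h2 _ (hSB _ hq).1), Or.inr ⟨q, hq, by simp⟩⟩
    · left; rw [hq]; exact ⟨p, hp, Sym2.eq_swap⟩
    · right; rw [hq]; exact ⟨aux _ _ (h2 _ (hSB _ hp).1).symm, Or.inr ⟨p, hp, by simp⟩⟩
    · right; exact ⟨aux _ _ (h3 _ (hSB _ hp).1 _ (hSB _ hq).1 hpq), Or.inr ⟨p, hp, by simp⟩⟩
  have hcol : ∀ r ∈ S, κ s(u, r) = cl r := by
    intro r hr
    have := h1 r (hSB r hr).1
    rw [hκ _ this.1, this.2]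
  have mixed : ∀ r ∈ S, ∀ p : Sym2 V, p ∈ insert s(u, x) E \ G.edgeSet →
      (p = s(u, x) ∨ ∃ r ∈ S, r ∈ p) → κ p ≠ cl r := by
    intro r hr p hp hp' heq
    have hr' := hI _ (hSB r hr).2.2.1
    rcases hp' with h | ⟨r', h, h'⟩
    · rw [h] at heq; exact hr'.2 heq.symm
    · have h4 := he _ p hp heq
      apply (hSB r' h).2.1
      refine Finset.mem_biUnion.2 ⟨cl r, Finset.mem_range.2 hr'.1, ?_⟩
      rw [← h4]; simpa using h'
  refine core hW hab hux S (fun h => hu (hSB _ h).1) (fun h => hx (hSB _ h).1) hScard ?_ ?_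
  · intro p hp q hq h
    rcases cls p hp q hq h with ⟨r, hr, h4⟩ | h4
    · rw [h4]; exact Set.mem_insert_of_mem _ (hE.1 (h1 r (hSB r hr).1).1)
    · exact h4.1.1
  · intro p hp q hq h p' hp' q' hq' h' heq
    rcases cls p hp q hq h with ⟨r, hr, h4⟩ | h4 <;>
      rcases cls p' hp' q' hq' h' with ⟨r', hr', h5⟩ | h5
    · rw [h4, h5] at heq ⊢
      rw [hcol _ hr, hcol _ hr'] at heq
      rw [(hSB r hr).2.2.2, (hSB r' hr').2.2.2, heq]
    · rw [h4, hcol _ hr] at heq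
      exact absurd heq.symm (mixed r hr _ h5.1 h5.2)
    · rw [h5, hcol _ hr'] at heq
      exact absurd heq (mixed r' hr' _ h4.1 h4.2)
    · exact hinj h4.1 h5.1 heq

/-- The joined graph. -/
def joinG {V₁ V₂ : Type*} (G₁ : SimpleGraph V₁) (G₂ : SimpleGraph V₂) (A₁ : Finset V₁)
    (A₂ : Finset V₂) : SimpleGraph (V₁ ⊕ V₂) where
  Adj
    | Sum.inl x, Sum.inl y => G₁.Adj x y
    | Sum.inr x, Sum.inr y => G₂.Adj x y
    | Sum.inl x, Sum.inr y => x ∈ A₁ ∧ y ∈ A₂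
    | Sum.inr y, Sum.inl x => x ∈ A₁ ∧ y ∈ A₂
  symm := ⟨by
    rintro (x | x) (y | y) h
    · exact G₁.adj_symm h
    · exact h
    · exact h
    · exact G₂.adj_symm h⟩
  loopless := ⟨by
    rintro (x | x) h
    · exact G₁.loopless.irrefl _ h
    · exact G₂.loopless.irrefl _ h⟩

/-- The color of an ordered pair in the joined graph. -/
def joinF {V₁ V₂ : Type*} [DecidableEq V₂] (c₁ : Sym2 V₁ → ℕ) (c₂ : Sym2 V₂ → ℕ)
    (B₂ : Finset V₂) (k₁ : V₁ → ℕ) (k₂ : V₂ → ℕ) : V₁ ⊕ V₂ → V₁ ⊕ V₂ → ℕ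
  | Sum.inl x, Sum.inl y => c₁ s(x, y)
  | Sum.inr x, Sum.inr y => c₂ s(x, y)
  | Sum.inl x, Sum.inr y => if y ∈ B₂ then k₂ y else k₁ x
  | Sum.inr y, Sum.inl x => if y ∈ B₂ then k₂ y else k₁ x

/-- The coloring of the joined graph. -/
def joinC {V₁ V₂ : Type*} [DecidableEq V₂] (c₁ : Sym2 V₁ → ℕ) (c₂ : Sym2 V₂ → ℕ)
    (B₂ : Finset V₂) (k₁ : V₁ → ℕ) (k₂ : V₂ → ℕ) : Sym2 (V₁ ⊕ V₂) → ℕ :=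
  Sym2.lift ⟨joinF c₁ c₂ B₂ k₁ k₂, by
    rintro (x | x) (y | y)
    · show c₁ _ = c₁ _
      rw [Sym2.eq_swap]
    · rfl
    · rfl
    · show c₂ _ = c₂ _
      rw [Sym2.eq_swap]⟩

lemma joinG_card {V₁ V₂ : Type*} [Fintype V₁] [Fintype V₂] (G₁ : SimpleGraph V₁)
    (G₂ : SimpleGraph V₂) (A₁ : Finset V₁) (A₂ : Finset V₂) :
    (joinG G₁ G₂ A₁ A₂).edgeSet.ncard ≤
      G₁.edgeSet.ncard + G₂.edgeSet.ncard + A₁.card * A₂.card := by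
  have hsub : (joinG G₁ G₂ A₁ A₂).edgeSet ⊆
      (Sym2.map Sum.inl '' G₁.edgeSet ∪ Sym2.map Sum.inr '' G₂.edgeSet) ∪
      (fun p : V₁ × V₂ => s(Sum.inl p.1, Sum.inr p.2)) '' ((A₁ ×ˢ A₂ : Finset (V₁ × V₂)) : Set (V₁ × V₂)) := by
    intro e he
    induction e with
    | h p q =>
      rcases p with x | x <;> rcases q with y | y
      · exact Or.inl (Or.inl ⟨s(x, y), he, rfl⟩)
      · exact Or.inr ⟨(x, y), Finset.mem_coe.2 (Finset.mem_product.2 he), rfl⟩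
      · exact Or.inr ⟨(y, x), Finset.mem_coe.2 (Finset.mem_product.2 he), Sym2.eq_swap⟩
      · exact Or.inl (Or.inr ⟨s(x, y), he, rfl⟩)
  refine (Set.ncard_le_ncard hsub (Set.toFinite _)).trans ?_
  refine (Set.ncard_union_le _ _).trans (add_le_add ?_ ?_)
  · refine (Set.ncard_union_le _ _).trans (add_le_add ?_ ?_)
    · exact Set.ncard_image_le (Set.toFinite _)
    · exact Set.ncard_image_le (Set.toFinite _)
  · refine (Set.ncard_image_le (Set.toFinite _)).trans ?_
    rw [Set.ncard_coe_finset, Finset.card_product]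

lemma join_sat {W V₁ V₂ : Type*} [Fintype W] [DecidableEq V₁] [DecidableEq V₂]
    {H : SimpleGraph W} {t : ℕ} (hW : Fintype.card W ≤ t) {a b : W} (hab : H.Adj a b)
    {G₁ : SimpleGraph V₁} {G₂ : SimpleGraph V₂} {c₁ : Sym2 V₁ → ℕ} {c₂ : Sym2 V₂ → ℕ}
    (s₁ : Sat H G₁ c₁) (s₂ : Sat H G₂ c₂)
    {U₁ B₁ R₁ : Finset V₁} {k₁ : V₁ → ℕ} (P₁ : Parts G₁ t U₁ B₁ R₁ k₁)
    {U₂ B₂ R₂ : Finset V₂} {k₂ : V₂ → ℕ} (P₂ : Parts G₂ t U₂ B₂ R₂ k₂) :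
    Sat H (joinG G₁ G₂ (U₁ ∪ B₁) (U₂ ∪ B₂)) (joinC c₁ c₂ B₂ k₁ k₂) := by
  intro E hE
  set G := joinG G₁ G₂ (U₁ ∪ B₁) (U₂ ∪ B₂) with hG
  set c := joinC c₁ c₂ B₂ k₁ k₂ with hc
  have e1 : ∀ x y : V₁, x ≠ y → s((Sum.inl x : V₁ ⊕ V₂), Sum.inl y) ∈ E :=
    transfer s₁ Sum.inl Sum.inl_injective (fun _ _ => Iff.rfl) (fun _ _ _ => rfl) hE
  have e2 : ∀ x y : V₂, x ≠ y → s((Sum.inr x : V₁ ⊕ V₂), Sum.inr y) ∈ E :=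
    transfer s₂ Sum.inr Sum.inr_injective (fun _ _ => Iff.rfl) (fun _ _ _ => rfl) hE
  have n1 : ∀ x y : V₁, x ≠ y → ¬ G₁.Adj x y → Non G E (Sum.inl x) (Sum.inl y) :=
    fun x y h h' => ⟨e1 x y h, h'⟩
  have n2 : ∀ x y : V₂, x ≠ y → ¬ G₂.Adj x y → Non G E (Sum.inr x) (Sum.inr y) :=
    fun x y h h' => ⟨e2 x y h, h'⟩
  have x2 : ∀ (x : V₁) (y : V₂), y ∈ R₂ → s((Sum.inl x : V₁ ⊕ V₂), Sum.inr y) ∈ E →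
      Non G E (Sum.inl x) (Sum.inr y) := by
    intro x y hy h
    refine ⟨h, fun h' => ?_⟩
    rcases Finset.mem_union.1 h'.2 with h'' | h''
    · exact P₂.RU y hy h''
    · exact P₂.RB y hy h''
  have x1 : ∀ (x : V₁) (y : V₂), x ∈ R₁ → s((Sum.inl x : V₁ ⊕ V₂), Sum.inr y) ∈ E →
      Non G E (Sum.inl x) (Sum.inr y) := by
    intro x y hx h
    refine ⟨h, fun h' => ?_⟩
    rcases Finset.mem_union.1 h'.1 with h'' | h''
    · exact P₁.RU x hx h''
    · exact P₁.RB x hx h''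
  have fill1 : ∀ (v : V₁) (y : V₂) (S : Finset V₁), v ∉ S → t ≤ S.card →
      (∀ s ∈ S, ¬ G₁.Adj v s) → (∀ p ∈ S, ∀ q ∈ S, ¬ G₁.Adj p q) →
      (∀ s ∈ S, Non G E (Sum.inl s) (Sum.inr y)) →
      s((Sum.inl v : V₁ ⊕ V₂), Sum.inr y) ∈ E := by
    intro v y S hv hS hadj hind hy
    refine fill hW hab hE (by simp) (S.map Function.Embedding.inl) (by simpa using hv) (by simp)
      (by simpa using hS) ?_ ?_ ?_
    · intro s hm
      obtain ⟨s, hs, rfl⟩ := Finset.mem_map.1 hm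
      exact n1 v s (fun h => hv (h ▸ hs)) (hadj s hs)
    · intro s hm
      obtain ⟨s, hs, rfl⟩ := Finset.mem_map.1 hm
      exact (hy s hs).symm
    · intro s hm s' hm' hne
      obtain ⟨s, hs, rfl⟩ := Finset.mem_map.1 hm
      obtain ⟨s', hs', rfl⟩ := Finset.mem_map.1 hm'
      exact n1 s s' (fun h => hne (by rw [h])) (hind s hs s' hs')
  have fill2 : ∀ (v : V₁) (y : V₂) (S : Finset V₂), y ∉ S → t ≤ S.card →
      (∀ s ∈ S, ¬ G₂.Adj y s) → (∀ p ∈ S, ∀ q ∈ S, ¬ G₂.Adj p q) →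
      (∀ s ∈ S, Non G E (Sum.inl v) (Sum.inr s)) →
      s((Sum.inl v : V₁ ⊕ V₂), Sum.inr y) ∈ E := by
    intro v y S hv hS hadj hind hy
    refine fill hW hab hE (by simp) (S.map Function.Embedding.inr) (by simp) (by simpa using hv)
      (by simpa using hS) ?_ ?_ ?_
    · intro s hm
      obtain ⟨s, hs, rfl⟩ := Finset.mem_map.1 hm
      exact hy s hs
    · intro s hm
      obtain ⟨s, hs, rfl⟩ := Finset.mem_map.1 hm
      exact n2 y s (fun h => hv (h ▸ hs)) (hadj s hs)
    · intro s hm s' hm' hne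
      obtain ⟨s, hs, rfl⟩ := Finset.mem_map.1 hm
      obtain ⟨s', hs', rfl⟩ := Finset.mem_map.1 hm'
      exact n2 s s' (fun h => hne (by rw [h])) (hind s hs s' hs')
  have st1 : ∀ u ∈ U₁ ∪ B₁, ∀ x ∈ R₂, Non G E (Sum.inl u) (Sum.inr x) := by
    intro u hu x hx
    apply x2 u x hx
    refine attach hW hab hE (by simp) (B₂.map Function.Embedding.inr) (Sum.elim k₁ k₂)
      (by simp) (by simpa using P₂.RB x hx) ?_ ?_ ?_ ?_
    · intro i hi
      rw [Finset.filter_map, Finset.card_map]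
      exact P₂.cls i hi
    · intro s hm
      obtain ⟨s, hs, rfl⟩ := Finset.mem_map.1 hm
      refine ⟨⟨hu, Finset.mem_union_right _ hs⟩, ?_⟩
      show (if s ∈ B₂ then k₂ s else k₁ u) = k₂ s
      rw [if_pos hs]
    · intro s hm
      obtain ⟨s, hs, rfl⟩ := Finset.mem_map.1 hm
      exact n2 x s (fun h => P₂.RB x hx (h ▸ hs)) (P₂.RadjB x hx s hs)
    · intro s hm s' hm' hne
      obtain ⟨s, hs, rfl⟩ := Finset.mem_map.1 hm
      obtain ⟨s', hs', rfl⟩ := Finset.mem_map.1 hm'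
      exact n2 s s' (fun h => hne (by rw [h])) (P₂.indB s hs s' hs')
  have st1' : ∀ y ∈ U₂, ∀ x ∈ R₁, Non G E (Sum.inl x) (Sum.inr y) := by
    intro y hy x hx
    apply x1 x y hx
    rw [Sym2.eq_swap]
    refine attach hW hab hE (by simp) (B₁.map Function.Embedding.inl) (Sum.elim k₁ k₂)
      (by simp) (by simpa using P₁.RB x hx) ?_ ?_ ?_ ?_
    · intro i hi
      rw [Finset.filter_map, Finset.card_map]
      exact P₁.cls i hi
    · intro s hm
      obtain ⟨s, hs, rfl⟩ := Finset.mem_map.1 hm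
      refine ⟨⟨Finset.mem_union_right _ hs, Finset.mem_union_left _ hy⟩, ?_⟩
      show (if y ∈ B₂ then k₂ y else k₁ s) = k₁ s
      rw [if_neg (P₂.dUB y hy)]
    · intro s hm
      obtain ⟨s, hs, rfl⟩ := Finset.mem_map.1 hm
      exact n1 x s (fun h => P₁.RB x hx (h ▸ hs)) (P₁.RadjB x hx s hs)
    · intro s hm s' hm' hne
      obtain ⟨s, hs, rfl⟩ := Finset.mem_map.1 hm
      obtain ⟨s', hs', rfl⟩ := Finset.mem_map.1 hm'
      exact n1 s s' (fun h => hne (by rw [h])) (P₁.indB s hs s' hs')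
  have st2 : ∀ v ∈ R₁, ∀ x ∈ R₂, Non G E (Sum.inl v) (Sum.inr x) := by
    intro v hv x hx
    apply x2 v x hx
    exact fill1 v x B₁ (P₁.RB v hv) P₁.bigB (P₁.RadjB v hv) P₁.indB
      (fun s hs => st1 s (Finset.mem_union_right _ hs) x hx)
  have st3 : ∀ v, ∀ x ∈ R₂, Non G E (Sum.inl v) (Sum.inr x) := by
    intro v x hx
    by_cases hv : v ∈ U₁
    · exact st1 v (Finset.mem_union_left _ hv) x hx
    · obtain ⟨S, hSR, hS, hvS, hind, hadj⟩ := P₁.ext v hv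
      exact x2 v x hx (fill1 v x S hvS hS.ge hadj hind (fun s hs => st2 s (hSR hs) x hx))
  have cross : ∀ v y, s((Sum.inl v : V₁ ⊕ V₂), Sum.inr y) ∈ E := by
    intro v y
    by_cases hy : y ∈ U₂
    · by_cases hv : v ∈ U₁
      · exact hE.1 ⟨Finset.mem_union_left _ hv, Finset.mem_union_left _ hy⟩
      · obtain ⟨S, hSR, hS, hvS, hind, hadj⟩ := P₁.ext v hv
        exact fill1 v y S hvS hS.ge hadj hind (fun s hs => st1' y hy s (hSR hs))
    · obtain ⟨S, hSR, hS, hyS, hind, hadj⟩ := P₂.ext y hy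
      exact fill2 v y S hyS hS.ge hadj hind (fun s hs => st3 v s (hSR hs))
  intro e he
  induction e with
  | h p q =>
    rcases p with x | x <;> rcases q with y | y
    · exact e1 x y (fun h => he (by rw [h]; rfl))
    · exact cross x y
    · rw [Sym2.eq_swap]; exact cross y x
    · exact e2 x y (fun h => he (by rw [h]; rfl))

end RW

/-- Subadditivity of the weak rainbow saturation number: if `H` is non-empty,
`t ≥ max(|V(H)|, 3)` satisfies `rwsat(n, H) ≤ t·n` for all positive `n`, then for
all `m₁, m₂ ≥ t^10`, `rwsat(m₁ + m₂, H) ≤ rwsat(m₁, H) + rwsat(m₂, H) + t^14`. -/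
theorem rwsat_subadditive {W : Type*} [Fintype W] (H : SimpleGraph W)
    (hH : H.edgeSet.Nonempty) (t : ℕ) (ht : max (Fintype.card W) 3 ≤ t)
    (hlin : ∀ n : ℕ, 0 < n → rwsat H n ≤ t * n)
    (m₁ m₂ : ℕ) (hm₁ : t ^ 10 ≤ m₁) (hm₂ : t ^ 10 ≤ m₂) :
    rwsat H (m₁ + m₂) ≤ rwsat H m₁ + rwsat H m₂ + t ^ 14 := by
  classical
  have ht3 : 3 ≤ t := (le_max_right _ _).trans ht
  have hW : Fintype.card W ≤ t := (le_max_left _ _).trans ht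
  obtain ⟨e, he⟩ := hH
  induction e with
  | h a b =>
    have hab : H.Adj a b := he
    have hpos : 0 < t ^ 10 := Nat.pow_pos (by omega)
    obtain ⟨G₁, c₁, s₁, h₁⟩ := RW.exists_sat H m₁
    obtain ⟨G₂, c₂, s₂, h₂⟩ := RW.exists_sat H m₂
    obtain ⟨U₁, B₁, R₁, k₁, P₁⟩ := RW.exists_parts G₁ t ht3 (by simpa using hm₁)
      (by rw [h₁, Fintype.card_fin]; exact hlin m₁ (by omega))
    obtain ⟨U₂, B₂, R₂, k₂, P₂⟩ := RW.exists_parts G₂ t ht3 (by simpa using hm₂)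
      (by rw [h₂, Fintype.card_fin]; exact hlin m₂ (by omega))
    have hs := RW.join_sat hW hab s₁ s₂ P₁ P₂
    refine (RW.rwsat_le hs (m₁ + m₂) (by simp)).trans ?_
    refine (RW.joinG_card _ _ _ _).trans ?_
    rw [h₁, h₂]
    have hA₁ : (U₁ ∪ B₁).card ≤ t ^ 7 := (Finset.card_union_le _ _).trans P₁.small
    have hA₂ : (U₂ ∪ B₂).card ≤ t ^ 7 := (Finset.card_union_le _ _).trans P₂.small
    have h14 : t ^ 14 = t ^ 7 * t ^ 7 := by ring
    rw [h14]
    exact Nat.add_le_add_left (Nat.mul_le_mul hA₁ hA₂) _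
end
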